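/- arXiv:2509.09662 — 3 statements merged into one kernel-verified Lean document; each statement's English description precedes it below -/
import Mathlib

section
/- The Galois group over Q of the splitting field of the polynomial X^24 - X - 1 ∈ Q[X] is isomorphic to the symmetric group S24. -/
open Polynomial
open scoped NumberField

/-!
Let `K` be the splitting field of an irreducible monic `f ∈ ℤ[X]`. The subfield of `K` fixed by all
inertia groups is unramified over `ℚ`, so by Minkowski it is `ℚ`: the Galois group is generated by
inertia. An element of the inertia group at `𝔪` fixes every root modulo `𝔪`, so if at most two roots
coincide modulo `𝔪` it acts as a transposition or trivially. A transitive permutation group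
generated by transpositions is the full symmetric group.

For `f = X ^ n - X - 1` the combination `X f' - n f = (n - 1) X + n` vanishes at every multiple root
of `f`. Its coefficients differ by `1`, so in any characteristic it has at most one zero; and that
zero is at most double because `X f'' = (n - 1) (f' + 1)`.
-/

theorem ramificationIdx_eq_one_of_inertia_le {A B C G : Type*}
    [CommRing A] [CommRing B] [CommRing C] [IsDomain A] [IsDomain B] [IsDomain C]
    [Algebra A B] [Algebra B C] [Algebra A C] [IsScalarTower A B C]
    [Module.Finite A C] [Module.Finite B C] [Module.Flat A C] [Module.Flat B C]
    [Group G] [Finite G] [MulSemiringAction G C] [IsGaloisGroup G A C]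
    (N : Subgroup G) [IsGaloisGroup N B C]
    (p : Ideal A) (P : Ideal B) (Q : Ideal C) [p.IsPrime] [P.IsPrime] [Q.IsPrime]
    [P.LiesOver p] [Q.LiesOver P] [PerfectField p.ResidueField] [PerfectField P.ResidueField]
    (hQ : Q.inertia G ≤ N) : P.ramificationIdx A = 1 := by
  have : Q.LiesOver p := .trans Q P p
  have hcard : Nat.card (Q.inertia N) = Nat.card (Q.inertia G) :=
    Nat.card_congr (Subgroup.subgroupOfEquivOfLe hQ).toEquiv
  rw [Ideal.card_inertia_eq_ramificationIdxIn P, Ideal.card_inertia_eq_ramificationIdxIn p,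
    Ideal.ramificationIdxIn_eq_ramificationIdx P Q N,
    Ideal.ramificationIdxIn_eq_ramificationIdx p Q G,
    Ideal.ramificationIdx_tower (R := A) P Q] at hcard
  exact (right_eq_mul₀ (Ideal.ramificationIdx_pos Q B).ne').mp hcard

theorem isUnramifiedAt_of_inertia_le {K : Type*} [Field K] [NumberField K] [IsGalois ℚ K]
    {N : Subgroup Gal(K/ℚ)} (hN : ∀ Q : Ideal (𝓞 K), Q.IsMaximal → Q.inertia Gal(K/ℚ) ≤ N)
    (P : Ideal (𝓞 (IntermediateField.fixedField N))) [P.IsMaximal] :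
    Algebra.IsUnramifiedAt ℤ P := by
  let L : IntermediateField ℚ K := IntermediateField.fixedField N
  have : IsGaloisGroup Gal(K/ℚ) ℤ (𝓞 K) := .of_isFractionRing _ _ _ ℚ K
  have : IsGaloisGroup N L K := .subgroup Gal(K/ℚ) ℚ K N
  have : IsGaloisGroup N (𝓞 L) (𝓞 K) := .of_isFractionRing _ _ _ L K
  obtain ⟨Q, _, _⟩ := (inferInstance : Nonempty (P.primesOver (𝓞 K)))
  have hQ : Q.IsMaximal := .of_liesOver_isMaximal Q P
  have hP : P ≠ ⊥ := Ideal.IsMaximal.ne_bot_of_isIntegral_int _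
  have hp : P.under ℤ ≠ ⊥ := fun h ↦ hP (Ideal.eq_bot_of_comap_eq_bot h)
  have : (P.under ℤ).IsMaximal := .under ℤ P
  have : Finite (𝓞 L ⧸ P) := Ring.HasFiniteQuotients.finiteQuotient hP
  have : Finite (ℤ ⧸ P.under ℤ) := Ring.HasFiniteQuotients.finiteQuotient hp
  rw [← Ideal.ramificationIdx_eq_one_iff]
  exact ramificationIdx_eq_one_of_inertia_le N (P.under ℤ) P Q (hN Q hQ)

theorem iSup_inertia_eq_top (K : Type*) [Field K] [NumberField K] [IsGalois ℚ K] :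
    ⨆ m : MaximalSpectrum (𝓞 K), m.asIdeal.inertia Gal(K/ℚ) = ⊤ := by
  set N : Subgroup Gal(K/ℚ) := ⨆ m : MaximalSpectrum (𝓞 K), m.asIdeal.inertia Gal(K/ℚ)
  let L : IntermediateField ℚ K := IntermediateField.fixedField N
  have hle (Q : Ideal (𝓞 K)) (hQ : Q.IsMaximal) : Q.inertia Gal(K/ℚ) ≤ N :=
    le_iSup (fun m : MaximalSpectrum (𝓞 K) ↦ m.asIdeal.inertia Gal(K/ℚ)) ⟨Q, hQ⟩
  have hrank : Module.finrank ℚ L = 1 := by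
    by_contra h
    obtain ⟨P, _, hP⟩ := NumberField.exists_not_isUnramifiedAt_int (𝒪 := 𝓞 L) h
    exact hP (isUnramifiedAt_of_inertia_le hle P)
  have hL : L = ⊥ := IntermediateField.finrank_eq_one_iff.mp hrank
  rw [← IntermediateField.fixingSubgroup_fixedField N]
  change L.fixingSubgroup = ⊤
  rw [hL, IntermediateField.fixingSubgroup_bot]

theorem card_le_card_toFinset_add_one_of_nodup_erase {α : Type*} [DecidableEq α] {s : Multiset α}
    {a : α} (h : (s.erase a).Nodup) : s.card ≤ s.toFinset.card + 1 :=
  calc s.card ≤ (s.erase a).card + 1 := by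
        simpa using Multiset.card_le_card (Multiset.le_cons_erase s a)
    _ = (s.erase a).toFinset.card + 1 := by rw [Multiset.toFinset_card_of_nodup h]
    _ ≤ s.toFinset.card + 1 := by
        gcongr
        exact Multiset.toFinset_subset.mpr (Multiset.erase_subset a s)

theorem natDegree_le_ncard_rootSet_add_one {R : Type*} [CommRing R] [IsDomain R] {g : R[X]}
    (hg : g.Splits) (hcoll : {a | 1 < g.rootMultiplicity a}.Subsingleton)
    (htwo : ∀ a, g.rootMultiplicity a ≤ 2) : g.natDegree ≤ (g.rootSet R).ncard + 1 := by
  classical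
  obtain ⟨a, ha⟩ : ∃ a, ∀ b ≠ a, g.rootMultiplicity b ≤ 1 := by
    obtain h | ⟨a, ha⟩ := hcoll.eq_empty_or_singleton
    · exact ⟨0, fun b _ ↦ not_lt.mp (Set.eq_empty_iff_forall_notMem.mp h b)⟩
    · exact ⟨a, fun b hb ↦ not_lt.mp fun h ↦ hb (ha.subset h)⟩
  rw [hg.natDegree_eq_card_roots, rootSet_def, Set.ncard_coe_finset, aroots_def,
    Algebra.algebraMap_self, map_id]
  refine card_le_card_toFinset_add_one_of_nodup_erase (a := a) ?_
  rw [Multiset.nodup_iff_count_le_one]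
  intro b
  obtain rfl | hb := eq_or_ne b a
  · simpa [Multiset.count_erase_self] using htwo b
  · simpa [Multiset.count_erase_of_ne hb] using ha b hb

section Selmer

variable {R : Type*} [CommRing R] {n : ℕ} {a : R}

theorem X_pow_sub_X_sub_one_monic [Nontrivial R] (hn : 2 ≤ n) :
    (X ^ n - X - 1 : R[X]).Monic := by
  rw [sub_sub]
  refine monic_X_pow_sub ?_
  rw [← C_1, degree_X_add_C]
  exact_mod_cast hn

theorem natDegree_X_pow_sub_X_sub_one [Nontrivial R] (hn : 2 ≤ n) :
    (X ^ n - X - 1 : R[X]).natDegree = n := by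
  rw [sub_sub, natDegree_sub_eq_left_of_natDegree_lt] <;> rw [natDegree_X_pow]
  rw [← C_1, natDegree_X_add_C]
  exact hn

theorem mul_pow_sub_one_eq_one_of_one_lt_rootMultiplicity
    (ha : 1 < (X ^ n - X - 1 : R[X]).rootMultiplicity a) : (n : R) * a ^ (n - 1) = 1 := by
  have h := isRoot_iterate_derivative_of_lt_rootMultiplicity ha
  simpa [derivative_X_pow, sub_eq_zero] using h

theorem sub_one_mul_eq_neg_of_one_lt_rootMultiplicity (hn : n ≠ 0)
    (ha : 1 < (X ^ n - X - 1 : R[X]).rootMultiplicity a) : (n - 1 : R) * a = -n := by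
  have hf : a ^ n - a - 1 = 0 := by
    simpa using isRoot_iterate_derivative_of_lt_rootMultiplicity (zero_lt_one.trans ha)
  have hf' := mul_pow_sub_one_eq_one_of_one_lt_rootMultiplicity ha
  rw [← mul_pow_sub_one hn] at hf
  linear_combination a * hf' - n * hf

theorem natCast_sub_one_ne_zero_of_one_lt_rootMultiplicity [Nontrivial R] (hn : n ≠ 0)
    (ha : 1 < (X ^ n - X - 1 : R[X]).rootMultiplicity a) : (n - 1 : R) ≠ 0 := by
  intro h
  have h₁ := sub_one_mul_eq_neg_of_one_lt_rootMultiplicity hn ha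
  exact one_ne_zero (show (1 : R) = 0 by linear_combination -h * (1 + a) + h₁)

theorem subsingleton_multiple_roots_X_pow_sub_X_sub_one [IsDomain R] (hn : n ≠ 0) :
    {a | 1 < (X ^ n - X - 1 : R[X]).rootMultiplicity a}.Subsingleton := by
  intro a ha b hb
  apply mul_left_cancel₀ (natCast_sub_one_ne_zero_of_one_lt_rootMultiplicity hn ha)
  rw [sub_one_mul_eq_neg_of_one_lt_rootMultiplicity hn ha,
    sub_one_mul_eq_neg_of_one_lt_rootMultiplicity hn hb]

theorem rootMultiplicity_X_pow_sub_X_sub_one_le_two [Nontrivial R] (hn : n ≠ 0) (a : R) :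
    (X ^ n - X - 1 : R[X]).rootMultiplicity a ≤ 2 := by
  by_contra! ha
  have hf' := mul_pow_sub_one_eq_one_of_one_lt_rootMultiplicity (one_lt_two.trans ha)
  have hn₁ := natCast_sub_one_ne_zero_of_one_lt_rootMultiplicity hn (one_lt_two.trans ha)
  have hf'' : (n : R) * ((n - 1 : R) * a ^ (n - 1 - 1)) = 0 := by
    simpa [derivative_X_pow, Nat.cast_pred (Nat.pos_of_ne_zero hn)] using
      isRoot_iterate_derivative_of_lt_rootMultiplicity ha
  have hn₂ : n - 1 ≠ 0 := fun h ↦ hn₁ (by simp [← Nat.cast_pred (Nat.pos_of_ne_zero hn), h])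
  rw [← mul_pow_sub_one hn₂] at hf'
  exact hn₁ (by linear_combination a * hf'' - (n - 1 : R) * hf')

end Selmer

theorem splits_map_of_isIntegralClosure {R B K : Type*} [CommRing R] [CommRing B]
    [Field K] [Algebra R K] [Algebra R B] [Algebra B K] [IsScalarTower R B K]
    [IsIntegralClosure B R K] {f : R[X]} (hf : f.Monic) (hK : (f.map (algebraMap R K)).Splits) :
    (f.map (algebraMap R B)).Splits := by
  have hmap : (f.map (algebraMap R B)).map (algebraMap B K) = f.map (algebraMap R K) := by
    rw [map_map, ← IsScalarTower.algebraMap_eq]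
  refine Splits.of_splits_map_of_injective (i := algebraMap B K)
    (IsIntegralClosure.algebraMap_injective B R K) (hmap ▸ hK) fun a ha ↦ ?_
  rw [hmap] at ha
  exact (IsIntegralClosure.isIntegral_iff (R := R)).mp
    ⟨f, hf, (eval_map _ _).symm.trans (isRoot_of_mem_roots ha)⟩

theorem nonempty_gal_mulEquiv_perm_of_factorial_le_card {F : Type*} [Field F] {q : F[X]}
    (hq : q.Separable) (hcard : q.natDegree.factorial ≤ Nat.card q.Gal) :
    Nonempty (q.Gal ≃* Equiv.Perm (Fin q.natDegree)) := by
  have hsplits := IsSplittingField.splits q.SplittingField q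
  have : Fact (q.map (algebraMap F q.SplittingField)).Splits := ⟨hsplits⟩
  have hroots : Nat.card (q.rootSet q.SplittingField) = q.natDegree := by
    rw [Nat.card_eq_fintype_card, card_rootSet_eq_natDegree hq hsplits]
  have hbij : Function.Bijective (Gal.galActionHom q q.SplittingField) :=
    (Gal.galActionHom_injective q q.SplittingField).bijective_of_nat_card_le <| by
      rwa [Nat.card_perm, hroots]
  exact ⟨(MulEquiv.ofBijective _ hbij).trans (Finite.equivFinOfCardEq hroots).permCongrHom⟩

theorem isPretransitive_rootSet_ringOfIntegers {f : ℤ[X]}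
    (hf : Irreducible (f.map (algebraMap ℤ ℚ))) (K : Type*) [Field K] [CharZero K]
    [Normal ℚ K] : MulAction.IsPretransitive Gal(K/ℚ) (f.rootSet (𝓞 K)) := by
  have hmin (x : f.rootSet (𝓞 K)) :=
    minpoly.eq_of_irreducible (x := algebraMap (𝓞 K) K x) hf <| by
      rw [aeval_map_algebraMap, aeval_algebraMap_apply, (mem_rootSet'.mp x.2).2, map_zero]
  refine ⟨fun x y ↦ ?_⟩
  obtain ⟨g, hg⟩ := (Normal.minpoly_eq_iff_mem_orbit K).mp ((hmin y).symm.trans (hmin x))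
  exact ⟨g, Subtype.ext (NumberField.RingOfIntegers.coe_injective hg)⟩

/-- The arithmetic half of Serre's notion of a Morse polynomial (*Topics in Galois Theory*, §4.4),
for monic `f` separable over `ℚ`: modulo each prime, at most one pair of roots of `f` collides.
Collisions are measured by counting the distinct roots in an algebraic closure of `𝔽_p`. -/
def IsMorse (f : ℤ[X]) : Prop :=
  ∀ (p : ℕ) [Fact p.Prime], f.natDegree ≤ (f.rootSet (AlgebraicClosure (ZMod p))).ncard + 1

namespace IsMorse

variable {f : ℤ[X]}

theorem natDegree_le_ncard_rootSet_add_one (hf : IsMorse f) {k : Type*} [Field k] [Finite k]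
    [Algebra ℤ k] (hk : (f.map (algebraMap ℤ k)).Splits) :
    f.natDegree ≤ (f.rootSet k).ncard + 1 := by
  obtain ⟨p, _⟩ := CharP.exists k
  have : Fact p.Prime := ⟨CharP.char_is_prime k p⟩
  let := ZMod.algebra k p
  let ι : k →ₐ[ZMod p] AlgebraicClosure (ZMod p) := IsAlgClosed.lift
  let φ : k →ₐ[ℤ] AlgebraicClosure (ZMod p) := { (ι : k →+* _) with commutes' := by simp }
  rw [← Set.ncard_image_of_injective _ φ.toRingHom.injective]
  exact (hk.image_rootSet φ).symm ▸ hf p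

theorem surjective_toPermHom (hf : IsMorse f) (hm : f.Monic)
    (hirr : Irreducible (f.map (algebraMap ℤ ℚ))) (K : Type*) [Field K] [NumberField K]
    [IsGalois ℚ K] (hK : (f.map (algebraMap ℤ K)).Splits) :
    Function.Surjective (MulAction.toPermHom Gal(K/ℚ) (f.rootSet (𝓞 K))) := by
  have hO : (f.map (algebraMap ℤ (𝓞 K))).Splits := splits_map_of_isIntegralClosure hm hK
  have := isPretransitive_rootSet_ringOfIntegers hirr K
  refine hO.surjective_toPermHom_of_iSup_inertia_eq_top (fun m ↦ ?_) (iSup_inertia_eq_top K)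
  have := m.isMaximal
  let := Ideal.Quotient.field m.asIdeal
  have : Finite (𝓞 K ⧸ m.asIdeal) :=
    Ring.HasFiniteQuotients.finiteQuotient (Ideal.IsMaximal.ne_bot_of_isIntegral_int _)
  have hres : (f.map (algebraMap ℤ (𝓞 K ⧸ m.asIdeal))).Splits := by
    rw [IsScalarTower.algebraMap_eq ℤ (𝓞 K), ← map_map]
    exact hO.map _
  exact (ncard_rootSet_le f (𝓞 K)).trans (hf.natDegree_le_ncard_rootSet_add_one hres)

theorem factorial_natDegree_le_card_gal (hf : IsMorse f) (hm : f.Monic)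
    (hirr : Irreducible (f.map (algebraMap ℤ ℚ))) (K : Type*) [Field K] [alg : Algebra ℚ K]
    [hsplit : IsSplittingField ℚ K (f.map (algebraMap ℤ ℚ))] :
    f.natDegree.factorial ≤ Nat.card Gal(K/ℚ) := by
  have : CharZero K := algebraRat.charZero K
  -- `SplittingField` carries a `ℚ`-algebra structure other than the one `NumberField` refers to.
  obtain rfl : alg = DivisionRing.toRatAlgebra := Subsingleton.elim _ _
  have : NumberField K :=
    { to_charZero := inferInstance
      to_finiteDimensional := IsSplittingField.finiteDimensional K (f.map (algebraMap ℤ ℚ)) }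
  have : IsGalois ℚ K := IsGalois.of_separable_splitting_field hirr.separable
  have hK : (f.map (algebraMap ℤ K)).Splits := by
    rw [IsScalarTower.algebraMap_eq ℤ ℚ, ← map_map]
    exact hsplit.splits
  have hcard : Nat.card (f.rootSet (𝓞 K)) = f.natDegree := by
    classical
    rw [Nat.card_coe_set_eq,
      ← Set.ncard_image_of_injective _ (FaithfulSMul.algebraMap_injective (𝓞 K) K),
      (splits_map_of_isIntegralClosure hm hK).image_rootSet_algebraMap, rootSet_def,
      ← aroots_map K ℚ, ← rootSet_def, ← Nat.card_coe_set_eq, Nat.card_eq_fintype_card,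
      card_rootSet_eq_natDegree hirr.separable hsplit.splits, hm.natDegree_map]
  rw [← hcard, ← Nat.card_perm]
  exact Nat.card_le_card_of_surjective _ (hf.surjective_toPermHom hm hirr K hK)

theorem nonempty_gal_mulEquiv_perm (hf : IsMorse f) (hm : f.Monic) (hirr : Irreducible f) :
    Nonempty ((f.map (algebraMap ℤ ℚ)).Gal ≃* Equiv.Perm (Fin f.natDegree)) := by
  have hirr' : Irreducible (f.map (algebraMap ℤ ℚ)) :=
    (hm.irreducible_iff_irreducible_map_fraction_map (K := ℚ)).mp hirr
  have hcard : f.natDegree.factorial ≤ Nat.card (f.map (algebraMap ℤ ℚ)).Gal :=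
    hf.factorial_natDegree_le_card_gal hm hirr' _
      (hsplit := IsSplittingField.splittingField (f.map (algebraMap ℤ ℚ)))
  rw [← hm.natDegree_map (algebraMap ℤ ℚ)] at hcard ⊢
  exact nonempty_gal_mulEquiv_perm_of_factorial_le_card hirr'.separable hcard

end IsMorse

theorem isMorse_X_pow_sub_X_sub_one {n : ℕ} (hn : 2 ≤ n) : IsMorse (X ^ n - X - 1) := by
  classical
  intro p _
  have hmap : (X ^ n - X - 1 : ℤ[X]).map (algebraMap ℤ (AlgebraicClosure (ZMod p))) =
      X ^ n - X - 1 := by simp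
  have hn₀ : n ≠ 0 := (zero_lt_two.trans_le hn).ne'
  have h := natDegree_le_ncard_rootSet_add_one (IsAlgClosed.splits _)
    (subsingleton_multiple_roots_X_pow_sub_X_sub_one (R := AlgebraicClosure (ZMod p)) hn₀)
    (rootMultiplicity_X_pow_sub_X_sub_one_le_two hn₀)
  rw [natDegree_X_pow_sub_X_sub_one hn] at h ⊢
  rwa [← hmap, rootSet_def, aroots_map, ← rootSet_def] at h

theorem trinomial_galois_general (n : ℕ) :
    Nonempty ((X ^ n - X - 1 : ℚ[X]).Gal ≃* Equiv.Perm (Fin n)) := by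
  obtain hn | hn := lt_or_ge n 2
  · have hdeg : (X ^ n - X - 1 : ℚ[X]).degree ≤ 1 := by
      interval_cases n <;> compute_degree
    have := Gal.uniqueGalOfSplits _ (Splits.of_degree_le_one hdeg)
    have : Subsingleton (Fin n) := Fin.subsingleton_iff_le_one.mpr (Nat.le_of_lt_succ hn)
    exact ⟨MulEquiv.ofUnique⟩
  · have hmap : (X ^ n - X - 1 : ℤ[X]).map (algebraMap ℤ ℚ) = X ^ n - X - 1 := by simp
    have h := (isMorse_X_pow_sub_X_sub_one hn).nonempty_gal_mulEquiv_perm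
      (X_pow_sub_X_sub_one_monic hn) (X_pow_sub_X_sub_one_irreducible (by lia))
    rwa [hmap, natDegree_X_pow_sub_X_sub_one hn] at h

/-- The Galois group over `ℚ` of (the splitting field of) `X^24 - X - 1` is isomorphic to
the symmetric group `S24`. -/
theorem trinomial_galois :
    Nonempty ((X ^ 24 - X - 1 : ℚ[X]).Gal ≃* Equiv.Perm (Fin 24)) :=
  trinomial_galois_general 24
end

section
/- Let g = X^24 + (2^67·3^24/(23^23·31·281·1201·70529·9801219477271))(X + 1) ∈ Q[X]. Then the Galois group over Q of the splitting field of g is isomorphic to the symmetric group S24. -/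
open Polynomial

/-- The polynomial `g = X^24 + (2^67 3^24 / (23^23 · 31 · 281 · 1201 · 70529 ·
9801219477271)) (X + 1)`. -/
noncomputable def gRevenge : ℚ[X] :=
  X ^ 24 +
    C ((2 ^ 67 * 3 ^ 24 : ℚ) /
      (23 ^ 23 * 31 * 281 * 1201 * 70529 * 9801219477271)) * (X + 1)

/-!
Write `g = X ^ 24 + c (X + 1)` and `k = 24 ^ 24 / c`, an integer. The substitution `y = 24 / x`
turns the roots of `g` into the roots of the monic integral trinomial
`f = X ^ 24 + 24 X ^ 23 + k`, whose derivative has only the roots `0` and `-23`.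

* The prime `31` divides `k` exactly once and does not divide `24`. At a prime `P` over `31`
  containing a root `y`, the equation `y ^ 23 (y + 24) = -k` shows that `23` divides the
  ramification index. So the Galois group contains an element of order `23`, a `23`-cycle.
* The prime `7` divides `f (-23)` exactly once and does not divide `24 k`, so it ramifies, while
  modulo a prime over `7` the only possible collision of roots is a double root at `-23`.
  A nontrivial inertia element is therefore a transposition.
* There is no rational root, as `f` has no root modulo `3`. Hence the point fixed by the `23`-cycle
  is not fixed by the whole group, which is thus primitive.

A primitive permutation group containing a transposition is the full symmetric group.
-/

section PermutationGroup

open MulAction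
open scoped Pointwise

variable {G Ω : Type*} [Group G] [MulAction G Ω]

theorem isPreprimitive_of_isCycle {g : G} {a : Ω} (hcycle : (toPerm g : Equiv.Perm Ω).IsCycle)
    (hfix : ∀ x, g • x = x ↔ x = a) (ha : a ∉ fixedPoints G Ω) : IsPreprimitive G Ω := by
  refine .of_isTrivialBlock_of_notMem_fixedPoints ha fun B haB hB ↦ ?_
  refine or_iff_not_imp_left.2 fun hsub ↦ Set.eq_univ_of_forall fun y ↦ ?_
  obtain ⟨b, hb, hba⟩ := (Set.not_subsingleton_iff.1 hsub).exists_ne a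
  obtain rfl | hya := eq_or_ne y a
  · exact haB
  have hgB : g • B = B := hB.smul_eq_of_mem haB (((hfix a).2 rfl).symm ▸ haB)
  obtain ⟨n, hn⟩ := hcycle.exists_zpow_eq (mt (hfix b).1 hba) (mt (hfix y).1 hya)
  have hgnB : g ^ n • B = B := mem_stabilizer_iff.1 (zpow_mem (mem_stabilizer_iff.2 hgB) n)
  rw [← hn, ← hgnB]
  exact (map_zpow (toPermHom G Ω) g n) ▸ Set.smul_mem_smul_set hb

theorem surjective_toPermHom_of_prime_dvd_card [Finite G] [FaithfulSMul G Ω] [Finite Ω]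
    [DecidableEq Ω] {q : ℕ} (hq : q.Prime) (hΩ : Nat.card Ω = q + 1) (hG : q ∣ Nat.card G)
    (hfix : fixedPoints G Ω = ∅) (hswap : ∃ g : G, (toPermHom G Ω g).IsSwap) :
    Function.Surjective (toPermHom G Ω) := by
  have := Fintype.ofFinite Ω
  have : Fact q.Prime := ⟨hq⟩
  rw [Nat.card_eq_fintype_card] at hΩ
  obtain ⟨c, hc⟩ := exists_prime_orderOf_dvd_card' q hG
  have horder : orderOf (toPerm c : Equiv.Perm Ω) = q := by
    rw [← hc]
    exact orderOf_injective (toPermHom G Ω) toPerm_injective c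
  have hcycle : (toPerm c : Equiv.Perm Ω).IsCycle :=
    Equiv.Perm.isCycle_of_prime_order' (horder ▸ hq) (by have := hq.two_le; omega)
  obtain ⟨a, ha⟩ : ∃ a, (toPerm c : Equiv.Perm Ω).supportᶜ = {a} := by
    rw [← Finset.card_eq_one, Finset.card_compl, ← hcycle.orderOf, horder, hΩ,
      Nat.add_sub_cancel_left]
  have hprim : IsPreprimitive G Ω := by
    refine isPreprimitive_of_isCycle hcycle (a := a) (fun x ↦ ?_) (hfix ▸ Set.notMem_empty a)
    simpa only [Finset.mem_compl, Equiv.Perm.notMem_support, toPerm_apply,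
      Finset.mem_singleton] using Finset.ext_iff.1 ha x
  obtain ⟨s, hs⟩ := hswap
  rw [← MonoidHom.range_eq_top]
  refine Equiv.Perm.subgroup_eq_top_of_isPreprimitive_of_isSwap_mem ?_ _ hs ⟨s, rfl⟩
  let f : Ω →ₑ[(toPermHom G Ω).rangeRestrict] Ω := ⟨id, fun _ _ ↦ rfl⟩
  exact .of_surjective (f := f) Function.surjective_id

end PermutationGroup

section SplitPolynomial

variable {R : Type*} [CommRing R] [IsDomain R] {f : R[X]}

theorem natDegree_le_card_toFinset_roots_add_one [DecidableEq R] {w : R[X]} {b : R}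
    (hf : f.Splits) (hderiv : derivative f = (X - C b) * w)
    (hw : ∀ x, f.IsRoot x → ¬ w.IsRoot x) : f.natDegree ≤ f.roots.toFinset.card + 1 := by
  have hle : f.roots ≤ f.roots.dedup + {b} := by
    refine Multiset.le_iff_count.2 fun x ↦ ?_
    by_cases hx : x ∈ f.roots
    · have hwx := hw x (isRoot_of_mem_roots hx)
      have hw0 : w ≠ 0 := fun h ↦ hwx (h ▸ eval_zero)
      have hd : derivative f ≠ 0 := hderiv ▸ mul_ne_zero (X_sub_C_ne_zero b) hw0
      have hmult : f.rootMultiplicity x - 1 ≤ (derivative f).rootMultiplicity x :=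
        (le_rootMultiplicity_iff hd).2
          (pow_sub_one_dvd_derivative_of_pow_dvd (f.pow_rootMultiplicity_dvd x))
      rw [hderiv, rootMultiplicity_mul (hderiv ▸ hd), rootMultiplicity_X_sub_C,
        rootMultiplicity_eq_zero hwx] at hmult
      rw [count_roots, Multiset.count_add, Multiset.count_singleton,
        Multiset.count_eq_one_of_mem f.roots.nodup_dedup (Multiset.mem_dedup.2 hx)]
      omega
    · simp only [Multiset.count_eq_zero_of_notMem hx, zero_le]
  calc f.natDegree = f.roots.card := hf.natDegree_eq_card_roots
    _ ≤ (f.roots.dedup + {b}).card := Multiset.card_le_card hle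
    _ = _ := by rw [Multiset.card_add, Multiset.card_singleton, Multiset.card_toFinset]

variable {P : Ideal R} [P.IsPrime] {s : R}

theorem exists_isRoot_sub_mem (hf : f.Splits) (hm : f.Monic) (hs : f.eval s ∈ P) :
    ∃ y, f.IsRoot y ∧ s - y ∈ P := by
  rw [hf.eval_eq_prod_roots_of_monic hm, Ideal.IsPrime.multiset_prod_mem_iff_exists_mem ‹_›] at hs
  obtain ⟨_, hy, hyP⟩ := hs
  obtain ⟨y, hyroot, rfl⟩ := Multiset.mem_map.1 hy
  exact ⟨y, isRoot_of_mem_roots hyroot, hyP⟩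

theorem eval_mem_sq_of_eval_derivative_mem (hf : f.Splits) (hm : f.Monic) (hs : f.eval s ∈ P)
    (hs' : f.derivative.eval s ∈ P) : f.eval s ∈ P ^ 2 := by
  obtain ⟨y, hy, hyP⟩ := exists_isRoot_sub_mem hf hm hs
  obtain ⟨z, hz⟩ := f.binomExpansion s (y - s)
  rw [add_sub_cancel, hy.eq_zero] at hz
  have htaylor : f.eval s = f.derivative.eval s * (s - y) + -z * (s - y) ^ 2 := by
    linear_combination -hz
  rw [htaylor]
  exact add_mem (sq P ▸ Ideal.mul_mem_mul hs' hyP)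
    (Ideal.mul_mem_left _ _ (Ideal.pow_mem_pow hyP 2))

end SplitPolynomial

theorem multiplicity_span_eq_of_pow_mul_eq {R : Type*} [CommRing R] [IsDedekindDomain R]
    {P : Ideal R} (hP : Prime P) {n : ℕ} {y u a v : R} (hy : y ≠ 0) (hu : u ∉ P) (hv : v ∉ P)
    (h : y ^ n * u = a * v) :
    multiplicity P (Ideal.span {a}) = n * multiplicity P (Ideal.span {y}) := by
  have hzero {z : R} (hz : z ∉ P) : emultiplicity P (Ideal.span {z}) = 0 := by
    rwa [emultiplicity_eq_zero, Ideal.dvd_span_singleton]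
  have hfin : FiniteMultiplicity P (Ideal.span {y}) :=
    .of_prime_left hP (mt Ideal.span_singleton_eq_bot.1 hy)
  have hmul := congrArg (fun z ↦ emultiplicity P (Ideal.span {z})) h
  simp only [← Ideal.span_singleton_mul_span_singleton, ← Ideal.span_singleton_pow,
    emultiplicity_mul hP, emultiplicity_pow hP, hzero hu, hzero hv, add_zero,
    hfin.emultiplicity_eq_multiplicity] at hmul
  exact multiplicity_eq_of_emultiplicity_eq_some (by exact_mod_cast hmul.symm)

section GaloisAction

open MulAction

variable {A B G : Type*} [CommRing A] [CommRing B] [IsDomain B] [Algebra A B] [Group G]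
  [MulSemiringAction G B]

theorem exists_isRoot_of_mem_fixedPoints [IsGaloisGroup G A B] [FaithfulSMul A B] {f : A[X]}
    {y : f.rootSet B} (hy : y ∈ fixedPoints G (f.rootSet B)) : ∃ n, f.IsRoot n := by
  obtain ⟨n, hn⟩ := (IsGaloisGroup.isInvariant (G := G) (A := A) (B := B)).isInvariant y.1
    fun g ↦ by rw [← rootSet.coe_smul, hy g]
  refine ⟨n, FaithfulSMul.algebraMap_injective A B ?_⟩
  rw [map_zero, ← aeval_algebraMap_apply_eq_algebraMap_eval, hn]
  exact aeval_eq_zero_of_mem_rootSet y.2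

theorem exists_isSwap_of_inertia_ne_bot [SMulCommClass G A B] {f : A[X]}
    [DecidableEq (f.rootSet B)] [FaithfulSMul G (f.rootSet B)]
    (hf : (f.map (algebraMap A B)).Splits) (P : Ideal B) [P.IsPrime]
    (hcard : (f.rootSet B).ncard ≤ (f.rootSet (B ⧸ P)).ncard + 1) (hP : P.inertia G ≠ ⊥) :
    ∃ g : G, (toPermHom G (f.rootSet B) g).IsSwap := by
  obtain ⟨⟨g, hg⟩, hne⟩ := Subgroup.ne_bot_iff_exists_ne_one.1 hP
  have hg1 : g ≠ 1 := fun h ↦ hne (Subtype.ext h)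
  refine ⟨g, (hf.toPermHom_apply_eq_one_or_isSwap_of_ncard_le_of_mem_inertia
    P hcard g hg).resolve_left fun h ↦ hg1 ?_⟩
  exact toPerm_injective (h.trans (map_one (toPermHom G _)).symm)

end GaloisAction

section Ramification

variable {A B G : Type*} [CommRing A] [IsDomain A] [CommRing B] [IsDedekindDomain B] [Algebra A B]
  [Module.Finite A B] [Module.Flat A B] [Group G] [Finite G] [MulSemiringAction G B]
  [IsGaloisGroup G A B]
variable (p : Ideal A) [p.IsPrime] (P : Ideal B) [P.IsPrime] [P.LiesOver p]

theorem multiplicity_map_dvd_card (hp : p.map (algebraMap A B) ≠ ⊥) :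
    multiplicity P (p.map (algebraMap A B)) ∣ Nat.card G := by
  rw [← Ideal.IsDedekindDomain.ramificationIdx_eq_multiplicity p P hp,
    ← Ideal.ramificationIdxIn_eq_ramificationIdx p P G,
    ← Ideal.ncard_primesOver_mul_ramificationIdxIn_mul_inertiaDegIn p B G]
  exact (dvd_mul_right _ _).mul_left _

theorem card_inertia_eq_multiplicity_map [PerfectField p.ResidueField]
    (hp : p.map (algebraMap A B) ≠ ⊥) :
    Nat.card (P.inertia G) = multiplicity P (p.map (algebraMap A B)) := by
  rw [← Ideal.IsDedekindDomain.ramificationIdx_eq_multiplicity p P hp,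
    ← Ideal.ramificationIdxIn_eq_ramificationIdx p P G, Ideal.card_inertia_eq_ramificationIdxIn p]

theorem inertia_ne_bot_of_map_le_sq [PerfectField p.ResidueField]
    (hp : p.map (algebraMap A B) ≠ ⊥) (hle : p.map (algebraMap A B) ≤ P ^ 2) :
    P.inertia G ≠ ⊥ := by
  have hP : Prime P := by
    refine Ideal.prime_of_isPrime ?_ ‹_›
    rintro rfl
    exact hp (le_bot_iff.1 (hle.trans (Ideal.pow_le_self two_ne_zero)))
  have hfin : FiniteMultiplicity P (p.map (algebraMap A B)) := .of_prime_left hP hp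
  have hlt : 1 < multiplicity P (p.map (algebraMap A B)) :=
    hfin.le_multiplicity_of_pow_dvd (Ideal.dvd_iff_le.2 hle)
  rw [← card_inertia_eq_multiplicity_map (G := G) p P hp] at hlt
  exact (Subgroup.one_lt_card_iff_ne_bot _).1 hlt

end Ramification

section LiesOverInt

variable {B : Type*} [CommRing B]

theorem map_span_singleton_int_ne_bot [CharZero B] {p : ℤ} (hp : p ≠ 0) :
    (Ideal.span {p}).map (algebraMap ℤ B) ≠ ⊥ := by
  rwa [Ne, Ideal.map_span, Set.image_singleton, Ideal.span_singleton_eq_bot, eq_intCast,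
    Int.cast_eq_zero]

variable (P : Ideal B) (p : ℤ) [P.LiesOver (Ideal.span {p})]

theorem intCast_mem_iff_dvd {n : ℤ} : (n : B) ∈ P ↔ p ∣ n := by
  rw [← Ideal.mem_span_singleton, Ideal.mem_of_liesOver P (Ideal.span {p}), eq_intCast]

variable {P p}

theorem prime_of_liesOver_span_singleton [IsDedekindDomain B] [CharZero B] [P.IsPrime]
    (hp : p ≠ 0) : Prime P := by
  refine Ideal.prime_of_isPrime ?_ ‹_›
  rintro rfl
  exact hp (Int.cast_eq_zero.1 (Ideal.mem_bot.1 ((intCast_mem_iff_dvd (⊥ : Ideal B) p).2 dvd_rfl)))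

theorem intCast_mem_sq_of_dvd_of_not_sq_dvd (hp : Prime p) {n : ℤ} (hpn : p ∣ n)
    (hpn2 : ¬ p ^ 2 ∣ n) (hn : (n : B) ∈ P ^ 2) : (p : B) ∈ P ^ 2 := by
  obtain ⟨m, rfl⟩ := hpn
  have hpm : ¬ p ∣ m := fun h ↦ hpn2 (sq p ▸ mul_dvd_mul_left p h)
  obtain ⟨a, b, hab⟩ := (Prime.coprime_iff_not_dvd hp).2 hpm
  have hpP : (p : B) ∈ P := (intCast_mem_iff_dvd P p).2 dvd_rfl
  have hbezout : (p : B) = a * (p : B) ^ 2 + b * ((p * m : ℤ) : B) := by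
    have := congrArg (Int.cast : ℤ → B) hab
    push_cast at this ⊢
    linear_combination -(p : B) * this
  rw [hbezout]
  exact add_mem (Ideal.mul_mem_left _ _ (Ideal.pow_mem_pow hpP 2)) (Ideal.mul_mem_left _ _ hn)

end LiesOverInt

section IntegralClosure

variable {A B L : Type*} [CommRing A] [CommRing B] [IsDomain B] [CommRing L] [IsDomain L]
  [Algebra A B] [Algebra B L] [Algebra A L] [IsScalarTower A B L] [IsIntegralClosure B A L]

theorem image_rootSet_of_isIntegralClosure {f : A[X]} (hf : f.Monic) :
    algebraMap B L '' f.rootSet B = f.rootSet L := by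
  ext x
  simp only [Set.mem_image, hf.mem_rootSet]
  constructor
  · rintro ⟨y, hy, rfl⟩
    rw [aeval_algebraMap_apply, hy, map_zero]
  · intro hx
    obtain ⟨y, rfl⟩ := IsIntegralClosure.isIntegral_iff (A := B).1 (⟨f, hf, hx⟩ : IsIntegral A x)
    refine ⟨y, IsIntegralClosure.algebraMap_injective B A L ?_, rfl⟩
    rw [← aeval_algebraMap_apply, hx, map_zero]

theorem splits_map_of_isIntegralClosure_s12 {f : A[X]} (hf : f.Monic)
    (hs : (f.map (algebraMap A L)).Splits) : (f.map (algebraMap A B)).Splits := by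
  rw [IsScalarTower.algebraMap_eq A B L, ← Polynomial.map_map] at hs
  refine hs.of_splits_map_of_injective (IsIntegralClosure.algebraMap_injective B A L) fun x hx ↦ ?_
  rw [Polynomial.map_map, ← IsScalarTower.algebraMap_eq] at hx
  have hxroot : x ∈ f.rootSet L := by
    rw [hf.mem_rootSet, ← eval_map_algebraMap]
    exact isRoot_of_mem_roots hx
  obtain ⟨y, -, hy⟩ := (image_rootSet_of_isIntegralClosure (B := B) hf).superset hxroot
  exact ⟨y, hy⟩

end IntegralClosure

section RingOfIntegers

open NumberField

variable {K : Type*} [Field K] [NumberField K] {f : ℤ[X]}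

theorem rootSet_map_int_rat (hf : f.Monic) :
    (f.map (algebraMap ℤ ℚ)).rootSet K = f.rootSet K := by
  ext x
  rw [hf.mem_rootSet, (hf.map _).mem_rootSet, aeval_map_algebraMap]

theorem faithfulSMul_rootSet_ringOfIntegers (hf : f.Monic)
    [IsSplittingField ℚ K (f.map (algebraMap ℤ ℚ))] :
    FaithfulSMul Gal(K/ℚ) (f.rootSet (𝓞 K)) := by
  refine ⟨fun {g₁ g₂} h ↦ AlgEquiv.coe_toAlgHom_injective ?_⟩
  have hadjoin := IsSplittingField.adjoin_rootSet K (f.map (algebraMap ℤ ℚ))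
  refine AlgHom.ext_of_adjoin_eq_top hadjoin fun x hx ↦ ?_
  rw [rootSet_map_int_rat hf] at hx
  obtain ⟨y, hy, rfl⟩ := (image_rootSet_of_isIntegralClosure (B := 𝓞 K) hf).superset hx
  exact congrArg (fun z : f.rootSet (𝓞 K) ↦ algebraMap (𝓞 K) K z) (h ⟨y, hy⟩)

theorem card_rootSet_ringOfIntegers (hf : f.Monic) (hsep : (f.map (algebraMap ℤ ℚ)).Separable)
    (hs : ((f.map (algebraMap ℤ ℚ)).map (algebraMap ℚ K)).Splits) :
    Nat.card (f.rootSet (𝓞 K)) = f.natDegree := by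
  rw [Nat.card_coe_set_eq, ← Set.ncard_image_of_injective _ (RingOfIntegers.coe_injective (K := K)),
    image_rootSet_of_isIntegralClosure hf, ← rootSet_map_int_rat hf, ← Nat.card_coe_set_eq,
    Nat.card_eq_fintype_card, card_rootSet_eq_natDegree hsep hs, hf.natDegree_map]

end RingOfIntegers

theorem isSplittingField_of_div_mem_rootSet {F K : Type*} [Field F] [Field K] [Algebra F K]
    {f g : F[X]} {a : F} (ha : a ≠ 0) [IsSplittingField F K g]
    (h : ∀ y : AlgebraicClosure K, y ∈ f.rootSet (AlgebraicClosure K) ↔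
      algebraMap F _ a / y ∈ g.rootSet (AlgebraicClosure K)) : IsSplittingField F K f := by
  have hcancel {L : Type _} [Field L] [Algebra F L] (y : L) :
      algebraMap F L a / (algebraMap F L a / y) = y := div_div_cancel₀ (by simpa using ha)
  have hmem {p : F[X]} {x : K} :
      algebraMap K (AlgebraicClosure K) x ∈ p.rootSet (AlgebraicClosure K) ↔ x ∈ p.rootSet K := by
    simp only [mem_rootSet, aeval_algebraMap_eq_zero_iff]
  obtain ⟨hg, hadjoin⟩ := isSplittingField_iff_intermediateField.1 ‹IsSplittingField F K g›
  refine isSplittingField_iff_intermediateField.2 ⟨?splits, ?adjoin⟩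
  case splits =>
    refine (IsAlgClosed.splits _).of_splits_map (algebraMap K (AlgebraicClosure K)) fun y hy ↦ ?_
    rw [Polynomial.map_map, ← IsScalarTower.algebraMap_eq] at hy
    have hyroot : y ∈ f.rootSet (AlgebraicClosure K) := by
      classical
      rwa [rootSet_def, Finset.mem_coe, Multiset.mem_toFinset]
    obtain ⟨x, -, hx⟩ :=
      (hg.image_rootSet (IsScalarTower.toAlgHom F K _)).superset ((h y).1 hyroot)
    refine ⟨algebraMap F K a / x, ?_⟩
    rw [map_div₀, ← IsScalarTower.algebraMap_apply]
    exact (congrArg _ hx).trans (hcancel y)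
  case adjoin =>
    rw [eq_top_iff, ← hadjoin, IntermediateField.adjoin_le_iff]
    intro x hx
    rw [← hcancel x]
    refine div_mem (algebraMap_mem _ a) (IntermediateField.subset_adjoin F _ (hmem.1 ((h _).2 ?_)))
    rwa [map_div₀, ← IsScalarTower.algebraMap_apply, hcancel, hmem]

/-- The trinomial `X ^ (q + 1) + (q + 1) X ^ q + k`. When `c * k = (q + 1) ^ (q + 1)`, its roots
are the `(q + 1) / x` with `x` a root of `X ^ (q + 1) + c (X + 1)`; it serves as a monic integral
replacement for that polynomial. -/
noncomputable def reciprocalTrinomial (q : ℕ) (k : ℤ) : ℤ[X] :=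
  X ^ (q + 1) + C (q + 1 : ℤ) * X ^ q + C k

namespace reciprocalTrinomial

section Basic

variable (q : ℕ) (k : ℤ)

theorem natDegree_eq : (reciprocalTrinomial q k).natDegree = q + 1 := by
  unfold reciprocalTrinomial; compute_degree!

theorem monic : (reciprocalTrinomial q k).Monic := by
  unfold reciprocalTrinomial; monicity!

variable {q k} {S : Type*} [CommRing S]

theorem aeval_eq (y : S) :
    aeval y (reciprocalTrinomial q k) = y ^ q * (y + (q + 1)) + k := by
  simp only [reciprocalTrinomial, map_add, map_mul, map_pow, aeval_X, aeval_C,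
    algebraMap_int_eq, Int.coe_castRingHom]
  push_cast
  ring

theorem eval_map_eq (y : S) : ((reciprocalTrinomial q k).map (algebraMap ℤ S)).eval y =
    y ^ q * (y + (q + 1)) + k := by
  rw [eval_map_algebraMap, aeval_eq]

theorem derivative_map_eq (hq : q ≠ 0) :
    derivative ((reciprocalTrinomial q k).map (algebraMap ℤ S)) =
      (X - C (-q : S)) * (C (q + 1 : S) * X ^ (q - 1)) := by
  obtain ⟨m, rfl⟩ := Nat.exists_eq_succ_of_ne_zero hq
  simp only [reciprocalTrinomial, Polynomial.map_add, Polynomial.map_mul, Polynomial.map_pow, map_X,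
    map_C, derivative_add, derivative_C_mul, derivative_C, derivative_X_pow_succ,
    Nat.succ_eq_add_one, Nat.add_sub_cancel]
  push_cast
  simp only [map_add, map_neg, map_natCast, map_one]
  ring

theorem le_ncard_rootSet [IsDomain S] (hq : q ≠ 0)
    (hf : ((reciprocalTrinomial q k).map (algebraMap ℤ S)).Splits) (hk : (k : S) ≠ 0)
    (hq1 : (q + 1 : S) ≠ 0) : q ≤ ((reciprocalTrinomial q k).rootSet S).ncard := by
  classical
  rw [rootSet_def, Set.ncard_coe_finset, ← Nat.add_le_add_iff_right (n := 1), ← natDegree_eq q k,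
    ← (monic q k).natDegree_map (algebraMap ℤ S)]
  refine natDegree_le_card_toFinset_roots_add_one hf (derivative_map_eq hq) fun x hx hwx ↦ ?_
  have hx0 : x = 0 := by
    simp only [IsRoot.def, eval_mul, eval_C, eval_pow, eval_X] at hwx
    exact eq_zero_of_pow_eq_zero ((mul_eq_zero.1 hwx).resolve_left hq1)
  rw [IsRoot.def, eval_map_eq, hx0, zero_pow hq, zero_mul, zero_add] at hx
  exact hk hx

theorem separable_map {F : Type*} [Field F] [CharZero F] (hq : q ≠ 0) (hk : k ≠ 0)
    (hk' : k + (-q) ^ q ≠ 0) : ((reciprocalTrinomial q k).map (algebraMap ℤ F)).Separable := by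
  have hcop {a : F} (ha : a ^ q * (a + (q + 1)) + k ≠ 0) :
      IsCoprime ((reciprocalTrinomial q k).map (algebraMap ℤ F)) (X - C a) := by
    refine ((irreducible_X_sub_C a).coprime_iff_not_dvd.2 fun h ↦ ha ?_).symm
    rwa [dvd_iff_isRoot, IsRoot.def, eval_map_eq] at h
  have hX : IsCoprime ((reciprocalTrinomial q k).map (algebraMap ℤ F)) X := by
    have := hcop (a := 0) (by rwa [zero_pow hq, zero_mul, zero_add, Int.cast_ne_zero])
    rwa [C_0, sub_zero] at this
  have hq1 : IsUnit (C (q + 1 : F)) := isUnit_C.2 (Nat.cast_add_one_ne_zero q).isUnit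
  rw [separable_def, derivative_map_eq hq]
  refine .mul_right (hcop fun h ↦ hk' ?_) ((isCoprime_mul_unit_left_right hq1 _ _).2 hX.pow_right)
  exact_mod_cast (by linear_combination h : (k + (-q) ^ q : F) = 0)

theorem not_isRoot_of_modEq_three (hq2 : 2 ∣ q + 1) (hq3 : 3 ∣ q + 1) (hk : k ≡ 1 [ZMOD 3])
    (n : ℤ) : ¬ (reciprocalTrinomial q k).IsRoot n := by
  intro hn
  have hneg_one_not_sq : ∀ x : ZMod 3, x ^ 2 + 1 ≠ 0 := by decide
  obtain ⟨j, hj⟩ := hq2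
  have hq0 : (q + 1 : ZMod 3) = 0 := by exact_mod_cast (ZMod.natCast_eq_zero_iff _ 3).2 hq3
  have hk1 : (k : ZMod 3) = 1 := by exact_mod_cast (ZMod.intCast_eq_intCast_iff k 1 3).2 hk
  have hmod := congrArg (Int.cast : ℤ → ZMod 3) ((aeval_eq n).symm.trans hn)
  push_cast at hmod
  rw [hq0, hk1, add_zero, ← pow_succ, hj, pow_mul'] at hmod
  exact hneg_one_not_sq _ hmod

end Basic

section GaloisGroup

variable {B : Type*} [CommRing B] [IsDedekindDomain B] [Module.Finite ℤ B] [CharZero B]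
  (G : Type*) [Group G] [Finite G] [MulSemiringAction G B] [IsGaloisGroup G ℤ B] {q : ℕ} {k : ℤ}

theorem dvd_card (hq : q ≠ 0) (hf : ((reciprocalTrinomial q k).map (algebraMap ℤ B)).Splits)
    {p : ℤ} (hp : Prime p) (hpk : p ∣ k) (hpk2 : ¬ p ^ 2 ∣ k) (hpq : ¬ p ∣ q + 1) :
    q ∣ Nat.card G := by
  have : (Ideal.span {p}).IsPrime := (Ideal.span_singleton_prime hp.ne_zero).2 hp
  obtain ⟨P, _, _⟩ := (Ideal.span {p}).nonempty_primesOver (S := B)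
  have hpB : (Ideal.span {p}).map (algebraMap ℤ B) ≠ ⊥ := map_span_singleton_int_ne_bot hp.ne_zero
  obtain ⟨y, hy, hyP⟩ := exists_isRoot_sub_mem hf ((monic q k).map _) (P := P) (s := 0) <| by
    rwa [eval_map_eq, zero_pow hq, zero_mul, zero_add, intCast_mem_iff_dvd P p]
  rw [zero_sub, neg_mem_iff] at hyP
  rw [IsRoot.def, eval_map_eq] at hy
  have hy0 : y ≠ 0 := by
    rintro rfl
    rw [zero_pow hq, zero_mul, zero_add, Int.cast_eq_zero] at hy
    exact hpk2 (hy ▸ dvd_zero _)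
  obtain ⟨v, rfl⟩ := hpk
  have hu : y + (q + 1) ∉ P := fun h ↦ hpq <| (intCast_mem_iff_dvd P p).1 <| by
    simpa using sub_mem h hyP
  have hv : ((-v : ℤ) : B) ∉ P := by
    rw [intCast_mem_iff_dvd P p, dvd_neg]
    exact fun h ↦ hpk2 (sq p ▸ mul_dvd_mul_left p h)
  have hfactor : y ^ q * (y + (q + 1)) = (p : B) * ((-v : ℤ) : B) := by
    push_cast at hy ⊢
    linear_combination hy
  calc q ∣ multiplicity P (Ideal.span {(p : B)}) :=
        Dvd.intro _ (multiplicity_span_eq_of_pow_mul_eq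
          (prime_of_liesOver_span_singleton hp.ne_zero) hy0 hu hv hfactor).symm
    _ = multiplicity P ((Ideal.span {p}).map (algebraMap ℤ B)) := by
        rw [Ideal.map_span, Set.image_singleton, eq_intCast]
    _ ∣ Nat.card G := multiplicity_map_dvd_card (Ideal.span {p}) P hpB

theorem inertia_ne_bot (hq : q ≠ 0) (hf : ((reciprocalTrinomial q k).map (algebraMap ℤ B)).Splits)
    {p : ℤ} (hp : Prime p) (hpk : p ∣ k + (-q) ^ q) (hpk2 : ¬ p ^ 2 ∣ k + (-q) ^ q)
    (P : Ideal B) [P.IsPrime] [P.LiesOver (Ideal.span {p})] : P.inertia G ≠ ⊥ := by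
  have : (Ideal.span {p}).IsPrime := (Ideal.span_singleton_prime hp.ne_zero).2 hp
  have heval : ((reciprocalTrinomial q k).map (algebraMap ℤ B)).eval (-q : B) =
      ((k + (-q) ^ q : ℤ) : B) := by
    rw [eval_map_eq]
    push_cast
    ring
  have hderiv : ((reciprocalTrinomial q k).map (algebraMap ℤ B)).derivative.eval (-q : B) = 0 := by
    rw [derivative_map_eq hq, eval_mul, eval_sub, eval_X, eval_C, sub_self, zero_mul]
  have hmem : ((reciprocalTrinomial q k).map (algebraMap ℤ B)).eval (-q : B) ∈ P := by
    rwa [heval, intCast_mem_iff_dvd P p]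
  have hsq : ((k + (-q) ^ q : ℤ) : B) ∈ P ^ 2 :=
    heval ▸ eval_mem_sq_of_eval_derivative_mem hf ((monic q k).map _) hmem (hderiv ▸ zero_mem P)
  refine inertia_ne_bot_of_map_le_sq (Ideal.span {p}) P
    (map_span_singleton_int_ne_bot hp.ne_zero) ?_
  rw [Ideal.map_span, Set.image_singleton, eq_intCast, Ideal.span_singleton_le_iff_mem]
  exact intCast_mem_sq_of_dvd_of_not_sq_dvd hp hpk hpk2 hsq

variable [FaithfulSMul G ((reciprocalTrinomial q k).rootSet B)]

theorem exists_isSwap [DecidableEq ((reciprocalTrinomial q k).rootSet B)] (hq : q ≠ 0)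
    (hf : ((reciprocalTrinomial q k).map (algebraMap ℤ B)).Splits)
    {p : ℤ} (hp : Prime p) (hpk : p ∣ k + (-q) ^ q) (hpk2 : ¬ p ^ 2 ∣ k + (-q) ^ q)
    (hk : ¬ p ∣ k) (hpq : ¬ p ∣ q + 1) :
    ∃ g : G, (MulAction.toPermHom G ((reciprocalTrinomial q k).rootSet B) g).IsSwap := by
  have : (Ideal.span {p}).IsPrime := (Ideal.span_singleton_prime hp.ne_zero).2 hp
  obtain ⟨P, _, _⟩ := (Ideal.span {p}).nonempty_primesOver (S := B)
  have hcast {n : ℤ} : (n : B ⧸ P) = 0 ↔ p ∣ n := by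
    rw [← intCast_mem_iff_dvd P p, ← Ideal.Quotient.eq_zero_iff_mem, map_intCast]
  have hsplits : ((reciprocalTrinomial q k).map (algebraMap ℤ (B ⧸ P))).Splits := by
    have := hf.map (algebraMap B (B ⧸ P))
    rwa [Polynomial.map_map, ← IsScalarTower.algebraMap_eq] at this
  have hq1 : (q + 1 : B ⧸ P) ≠ 0 := by exact_mod_cast mt (hcast (n := q + 1)).1 hpq
  refine exists_isSwap_of_inertia_ne_bot hf P ?_ (inertia_ne_bot G hq hf hp hpk hpk2 P)
  calc ((reciprocalTrinomial q k).rootSet B).ncard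
    _ ≤ q + 1 := (ncard_rootSet_le _ _).trans_eq (natDegree_eq q k)
    _ ≤ _ := Nat.succ_le_succ (le_ncard_rootSet hq hsplits (mt hcast.1 hk) hq1)

theorem surjective_toPermHom (hq : q.Prime)
    (hf : ((reciprocalTrinomial q k).map (algebraMap ℤ B)).Splits)
    (hcard : Nat.card ((reciprocalTrinomial q k).rootSet B) = q + 1)
    (hroot : ∀ n, ¬ (reciprocalTrinomial q k).IsRoot n)
    {p : ℤ} (hp : Prime p) (hpk : p ∣ k) (hpk2 : ¬ p ^ 2 ∣ k) (hpq : ¬ p ∣ q + 1)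
    {ℓ : ℤ} (hℓ : Prime ℓ) (hℓf : ℓ ∣ k + (-q) ^ q) (hℓf2 : ¬ ℓ ^ 2 ∣ k + (-q) ^ q)
    (hℓk : ¬ ℓ ∣ k) (hℓq : ¬ ℓ ∣ q + 1) :
    Function.Surjective (MulAction.toPermHom G ((reciprocalTrinomial q k).rootSet B)) := by
  classical
  refine surjective_toPermHom_of_prime_dvd_card hq hcard
    (dvd_card G hq.ne_zero hf hp hpk hpk2 hpq) (Set.eq_empty_iff_forall_notMem.2 fun y hy ↦ ?_)
    (exists_isSwap G hq.ne_zero hf hℓ hℓf hℓf2 hℓk hℓq)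
  obtain ⟨n, hn⟩ := exists_isRoot_of_mem_fixedPoints hy
  exact hroot n hn

end GaloisGroup

section SplittingField

open NumberField

variable {q : ℕ} {k : ℤ}

theorem nonempty_gal_mulEquiv_perm (K : Type*) [Field K] [NumberField K]
    [IsSplittingField ℚ K ((reciprocalTrinomial q k).map (algebraMap ℤ ℚ))] (hq : q.Prime)
    (hroot : ∀ n, ¬ (reciprocalTrinomial q k).IsRoot n)
    {p : ℤ} (hp : Prime p) (hpk : p ∣ k) (hpk2 : ¬ p ^ 2 ∣ k) (hpq : ¬ p ∣ q + 1)
    {ℓ : ℤ} (hℓ : Prime ℓ) (hℓf : ℓ ∣ k + (-q) ^ q) (hℓf2 : ¬ ℓ ^ 2 ∣ k + (-q) ^ q)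
    (hℓk : ¬ ℓ ∣ k) (hℓq : ¬ ℓ ∣ q + 1) :
    Nonempty (Gal(K/ℚ) ≃* Equiv.Perm (Fin (q + 1))) := by
  classical
  let f := reciprocalTrinomial q k
  have : IsGalois ℚ K := { to_normal := Normal.of_isSplittingField (f.map (algebraMap ℤ ℚ)) }
  have : FaithfulSMul Gal(K/ℚ) (f.rootSet (𝓞 K)) := faithfulSMul_rootSet_ringOfIntegers (monic q k)
  have hs : ((f.map (algebraMap ℤ ℚ)).map (algebraMap ℚ K)).Splits := IsSplittingField.splits K _
  have hsep : (f.map (algebraMap ℤ ℚ)).Separable :=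
    separable_map hq.ne_zero (fun h ↦ hpk2 (h ▸ dvd_zero _)) (fun h ↦ hℓf2 (h ▸ dvd_zero _))
  have hcard : Nat.card (f.rootSet (𝓞 K)) = q + 1 :=
    (card_rootSet_ringOfIntegers (monic q k) hsep hs).trans (natDegree_eq q k)
  rw [Polynomial.map_map, ← IsScalarTower.algebraMap_eq] at hs
  have hsurj := surjective_toPermHom Gal(K/ℚ) hq (splits_map_of_isIntegralClosure_s12 (monic q k) hs)
    hcard hroot hp hpk hpk2 hpq hℓ hℓf hℓf2 hℓk hℓq
  exact ⟨(MulEquiv.ofBijective _ ⟨MulAction.toPerm_injective, hsurj⟩).trans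
    (Finite.equivFinOfCardEq hcard).permCongrHom⟩

theorem mem_rootSet_map_iff_div_mem_rootSet {L : Type*} [Field L] [Algebra ℚ L] (hq : q ≠ 0)
    {c : ℚ} (hck : c * k = (q + 1) ^ (q + 1)) (y : L) :
    y ∈ ((reciprocalTrinomial q k).map (algebraMap ℤ ℚ)).rootSet L ↔
      algebraMap ℚ L (q + 1) / y ∈ (X ^ (q + 1) + C c * (X + 1) : ℚ[X]).rootSet L := by
  have : CharZero L := algebraRat.charZero L
  have hmonic : (X ^ (q + 1) + C c * (X + 1) : ℚ[X]).Monic := by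
    monicity!
    exact fun h ↦ absurd h hq
  have hckL : algebraMap ℚ L c * k = (q + 1) ^ (q + 1) := by
    simpa only [map_mul, map_pow, map_add, map_intCast, map_natCast, map_one] using
      congrArg (algebraMap ℚ L) hck
  have hq1 : (q + 1 : L) ≠ 0 := Nat.cast_add_one_ne_zero q
  obtain ⟨hc, hk⟩ := mul_ne_zero_iff.1 (hckL ▸ pow_ne_zero (q + 1) hq1)
  rw [((monic q k).map _).mem_rootSet, aeval_map_algebraMap, aeval_eq, hmonic.mem_rootSet]
  simp only [map_add, map_mul, map_pow, aeval_X, aeval_C, map_one, map_natCast]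
  obtain rfl | hy := eq_or_ne y 0
  · simp only [zero_pow hq, zero_pow q.succ_ne_zero, zero_mul, zero_add, div_zero, mul_one, hk, hc]
  have hsubst : ((q + 1) / y) ^ (q + 1) + algebraMap ℚ L c * ((q + 1) / y + 1) =
      algebraMap ℚ L c / y ^ (q + 1) * (y ^ q * (y + (q + 1)) + k) := by
    rw [div_pow, ← hckL]
    field_simp
    ring
  rw [hsubst, mul_eq_zero_iff_left (div_ne_zero hc (pow_ne_zero _ hy))]

end SplittingField

end reciprocalTrinomial

theorem nonempty_gal_X_pow_add_C_mul_X_add_one_mulEquiv_perm {q : ℕ} {k : ℤ} {c : ℚ}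
    (hq : q.Prime) (hck : c * k = (q + 1) ^ (q + 1))
    (hroot : ∀ n, ¬ (reciprocalTrinomial q k).IsRoot n)
    {p : ℤ} (hp : Prime p) (hpk : p ∣ k) (hpk2 : ¬ p ^ 2 ∣ k) (hpq : ¬ p ∣ q + 1)
    {ℓ : ℤ} (hℓ : Prime ℓ) (hℓf : ℓ ∣ k + (-q) ^ q) (hℓf2 : ¬ ℓ ^ 2 ∣ k + (-q) ^ q)
    (hℓk : ¬ ℓ ∣ k) (hℓq : ¬ ℓ ∣ q + 1) :
    Nonempty ((X ^ (q + 1) + C c * (X + 1) : ℚ[X]).Gal ≃* Equiv.Perm (Fin (q + 1))) := by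
  -- The `ℚ`-algebra structure of `SplittingField` is not definitionally the one that comes from
  -- characteristic zero, which `NumberField` uses, so the structure is generalized first.
  suffices h : ∀ (K : Type) [Field K] [CharZero K] (_ : Algebra ℚ K)
      (_ : IsSplittingField ℚ K (X ^ (q + 1) + C c * (X + 1) : ℚ[X])),
      Nonempty (Gal(K/ℚ) ≃* Equiv.Perm (Fin (q + 1))) from
    h _ _ (IsSplittingField.splittingField _)
  intro K _ _ alg _
  obtain rfl : alg = DivisionRing.toRatAlgebra := Subsingleton.elim _ _
  have : IsSplittingField ℚ K ((reciprocalTrinomial q k).map (algebraMap ℤ ℚ)) :=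
    isSplittingField_of_div_mem_rootSet (Nat.cast_add_one_ne_zero q)
      (reciprocalTrinomial.mem_rootSet_map_iff_div_mem_rootSet hq.ne_zero hck)
  have : FiniteDimensional ℚ K :=
    IsSplittingField.finiteDimensional K (X ^ (q + 1) + C c * (X + 1) : ℚ[X])
  have : NumberField K := { }
  exact reciprocalTrinomial.nonempty_gal_mulEquiv_perm K hq hroot hp hpk hpk2 hpq
    hℓ hℓf hℓf2 hℓk hℓq

/-- The Galois group over `ℚ` of (the splitting field of) `g` is isomorphic to the
symmetric group `S24`. -/
theorem g_galois : Nonempty (gRevenge.Gal ≃* Equiv.Perm (Fin 24)) := by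
  let k : ℤ := 32 * 23 ^ 23 * (31 * 281 * 1201 * 70529 * 9801219477271)
  have hk : k ≡ 1 [ZMOD 3] := by norm_num [k, Int.ModEq]
  have hroot : ∀ n, ¬ (reciprocalTrinomial 23 k).IsRoot n :=
    reciprocalTrinomial.not_isRoot_of_modEq_three (by norm_num) (by norm_num) hk
  exact nonempty_gal_X_pow_add_C_mul_X_add_one_mulEquiv_perm (q := 23) (p := 31) (ℓ := 7)
    (by norm_num) (by norm_num [k]) hroot
    (by norm_num) (by norm_num [k]) (by norm_num [k]) (by norm_num)
    (by norm_num) (by norm_num [k]) (by norm_num [k]) (by norm_num [k]) (by norm_num)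
end

section
/- For each i ∈ {1, 2, 3}, the Galois group over Q of the splitting field of hᵢ is isomorphic to the symmetric group S24, where h1 = X^24 + (2^64·3^23/(23^23·31·281·1201·70529·9801219477271))(X + 1), h2 = X^24 - (2^75·3^14·31·281·1201·70529·9801219477271/(7^2·23^22·195574568093355782014153^2))(X + 1), and h3 = X^24 - (2^72·3^24·7·1437417619559484462138047/23^22)(X + 1) in Q[X]. -/
open Polynomial

/-- `h1 = X^24 + (2^64 3^23 / (23^23 · 31 · 281 · 1201 · 70529 · 9801219477271)) (X + 1)`. -/
noncomputable def h1Prof : ℚ[X] :=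
  X ^ 24 +
    C ((2 ^ 64 * 3 ^ 23 : ℚ) /
      (23 ^ 23 * 31 * 281 * 1201 * 70529 * 9801219477271)) * (X + 1)

/-- `h2 = X^24 - (2^75 · 3^14 · 31 · 281 · 1201 · 70529 · 9801219477271 /
(7^2 · 23^22 · 195574568093355782014153^2)) (X + 1)`. -/
noncomputable def h2Prof : ℚ[X] :=
  X ^ 24 -
    C ((2 ^ 75 * 3 ^ 14 * 31 * 281 * 1201 * 70529 * 9801219477271 : ℚ) /
      (7 ^ 2 * 23 ^ 22 * 195574568093355782014153 ^ 2)) * (X + 1)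

/-- `h3 = X^24 - (2^72 · 3^24 · 7 · 1437417619559484462138047 / 23^22) (X + 1)`. -/
noncomputable def h3Prof : ℚ[X] :=
  X ^ 24 -
    C ((2 ^ 72 * 3 ^ 24 * 7 * 1437417619559484462138047 : ℚ) / 23 ^ 22) * (X + 1)

/-! Scaling the roots makes each polynomial a monic integral trinomial `f` of degree `24`. Reduction
at a prime `p` for which `f mod p` is separable yields an element of the Galois group that acts on
the roots of `f` as the `p`-power map acts on the roots of `f mod p`, so its cycle type is the list
of degrees of the factors of `f mod p`.

At one prime these degrees are `23` and `1`, giving a `23`-cycle. Modulo another prime `f` has no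
root, hence it has no rational root, the fixed point of the `23`-cycle is moved by the Galois group,
and the action is doubly transitive. At a third prime the degrees are `2` and divisors of `21`, so
the `21`-st power of the Frobenius is a transposition. A doubly transitive group is primitive, and a
primitive group containing a transposition is the full symmetric group.

The factor degrees are detected by divisibilities `f ∣ X ^ p ^ d - X` and
`f ∣ u * (X ^ p ^ d - X)` over `ZMod p`, which are equalities in `(ZMod p)[X] ⧸ (f)` and are
computed there on coefficient lists.
-/

section PermutationGroups

variable {α : Type*} [Finite α] {q : ℕ}

lemma exists_fixed_and_zpow_of_pow_prime_eq_one (hq : q.Prime) (hα : Nat.card α = q + 1)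
    {σ : Equiv.Perm α} (hpow : σ ^ q = 1) (hne : σ ≠ 1) :
    ∃ a, σ a = a ∧ ∀ {x y}, x ≠ a → y ≠ a → ∃ k : ℤ, (σ ^ k) x = y := by
  classical
  have := Fintype.ofFinite α
  rw [Nat.card_eq_fintype_card] at hα
  have horder : orderOf σ = q := have := Fact.mk hq; orderOf_eq_prime hpow hne
  have hcycle : σ.IsCycle := Equiv.Perm.isCycle_of_prime_order' (horder ▸ hq)
    (by rw [hα, horder]; linarith [hq.two_le])
  have hcompl : σ.supportᶜ.card = 1 := by
    rw [Finset.card_compl, ← hcycle.orderOf, horder, hα, Nat.add_sub_cancel_left]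
  obtain ⟨a, ha⟩ := Finset.card_eq_one.mp hcompl
  have hfix (x) : σ x = x ↔ x = a := by
    rw [← Equiv.Perm.notMem_support, ← Finset.mem_compl, ha, Finset.mem_singleton]
  exact ⟨a, (hfix a).mpr rfl, fun hx hy ↦
    hcycle.sameCycle ((hfix _).not.mpr hx) ((hfix _).not.mpr hy)⟩

lemma isMultiplyPretransitive_two_of_zpow {α : Type*} {G : Subgroup (Equiv.Perm α)}
    {σ : Equiv.Perm α} (hσ : σ ∈ G) {a : α} (ha : σ a = a)
    (hzpow : ∀ {x y}, x ≠ a → y ≠ a → ∃ k : ℤ, (σ ^ k) x = y) (hmove : ∃ g ∈ G, g a ≠ a) :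
    MulAction.IsMultiplyPretransitive G α 2 := by
  obtain ⟨g, hg, hga⟩ := hmove
  have : MulAction.IsPretransitive G α := .of_orbit (x₀ := a) fun x ↦ by
    obtain rfl | hx := eq_or_ne x a
    · exact ⟨1, one_smul _ _⟩
    · obtain ⟨k, hk⟩ := hzpow hga hx
      exact ⟨⟨σ ^ k * g, G.mul_mem (G.zpow_mem hσ k) hg⟩, hk⟩
  rw [SubMulAction.ofStabilizer.isMultiplyPretransitive (a := a),
    MulAction.is_one_pretransitive_iff]
  refine ⟨fun x y ↦ ?_⟩
  obtain ⟨k, hk⟩ := hzpow x.2 y.2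
  let s : MulAction.stabilizer G a := ⟨⟨σ, hσ⟩, ha⟩
  exact ⟨s ^ k, Subtype.ext hk⟩

theorem subgroup_eq_top_of_pow_prime_eq_one_of_isSwap {G : Subgroup (Equiv.Perm α)}
    (hq : q.Prime) (hα : Nat.card α = q + 1) {σ τ : Equiv.Perm α} (hσ : σ ∈ G)
    (hpow : σ ^ q = 1) (hne : σ ≠ 1) (hmove : ∀ x, ∃ g ∈ G, g x ≠ x) (hτ : τ ∈ G)
    (hswap : ∀ [DecidableEq α], τ.IsSwap) : G = ⊤ := by
  classical
  obtain ⟨a, ha, hzpow⟩ := exists_fixed_and_zpow_of_pow_prime_eq_one hq hα hpow hne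
  have := isMultiplyPretransitive_two_of_zpow hσ ha hzpow (hmove a)
  exact Equiv.Perm.subgroup_eq_top_of_isPreprimitive_of_isSwap_mem
    (MulAction.isPreprimitive_of_is_two_pretransitive this) τ hswap hτ

end PermutationGroups

section FrobeniusOnRoots

lemma dvd_of_separable_of_aeval_eq_zero {F K : Type*} [Field F] [Field K] [IsAlgClosed K]
    [Algebra F K] {f g : F[X]} (hf : f.Separable)
    (h : ∀ y : K, aeval y f = 0 → aeval y g = 0) : f ∣ g := by
  obtain rfl | hg := eq_or_ne g 0
  · exact dvd_zero f
  rw [← map_dvd_map' (algebraMap F K)]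
  refine (IsAlgClosed.splits _).dvd_of_roots_le_roots hf.map.ne_zero
    ((Multiset.le_iff_subset (nodup_roots hf.map)).mpr fun y hy ↦ ?_)
  have hy' : aeval y f = 0 := by
    rwa [mem_roots hf.map.ne_zero, IsRoot.def, eval_map_algebraMap] at hy
  rw [mem_roots (Polynomial.map_ne_zero hg), IsRoot.def, eval_map_algebraMap]
  exact h y hy'

variable {p : ℕ} [Fact p.Prime] {α : Type*} {f : (ZMod p)[X]} {π : Equiv.Perm α}

/-- The permutation `π` of `α` is conjugate to the permutation of the roots of `f` in an algebraic
closure of `ZMod p` induced by the `p`-power map. -/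
def IsFrobeniusOnRoots (f : (ZMod p)[X]) (π : Equiv.Perm α) : Prop :=
  ∃ ρ : α → AlgebraicClosure (ZMod p),
    ρ.Injective ∧ Set.range ρ = f.rootSet (AlgebraicClosure (ZMod p)) ∧ ∀ x, ρ (π x) = ρ x ^ p

lemma apply_pow_eq_pow_pow {M : Type*} [Monoid M] {ρ : α → M} {p : ℕ}
    (h : ∀ x, ρ (π x) = ρ x ^ p) (d : ℕ) (x : α) : ρ ((π ^ d) x) = ρ x ^ p ^ d := by
  induction d with
  | zero => simp
  | succ d ih => rw [pow_succ' π, Equiv.Perm.mul_apply, h, ih, ← pow_mul, ← pow_succ]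

lemma separable_of_dvd_X_pow_sub_X {d : ℕ} (hd : d ≠ 0) (h : f ∣ X ^ p ^ d - X) :
    f.Separable :=
  (galois_poly_separable p _ (dvd_pow_self p hd)).of_dvd h

namespace IsFrobeniusOnRoots

lemma finite (hπ : IsFrobeniusOnRoots f π) : Finite α := by
  obtain ⟨ρ, hinj, hrange, -⟩ := hπ
  have : Finite (Set.range ρ) := hrange ▸ rootSet_finite f _
  exact Finite.of_injective_finite_range hinj

lemma card_eq_natDegree (hπ : IsFrobeniusOnRoots f π) (hf : f.Separable) :
    Nat.card α = f.natDegree := by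
  obtain ⟨ρ, hinj, hrange, -⟩ := hπ
  rw [← Nat.card_range_of_injective hinj, hrange, Nat.card_eq_fintype_card,
    card_rootSet_eq_natDegree hf (IsAlgClosed.splits _)]

lemma pow_eq_one_of_dvd (hπ : IsFrobeniusOnRoots f π) {d : ℕ} (h : f ∣ X ^ p ^ d - X) :
    π ^ d = 1 := by
  obtain ⟨ρ, hinj, hrange, hρ⟩ := hπ
  refine Equiv.ext fun x ↦ hinj ?_
  have hroot : aeval (ρ x) f = 0 :=
    aeval_eq_zero_of_mem_rootSet (hrange ▸ Set.mem_range_self x)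
  rw [apply_pow_eq_pow_pow hρ, Equiv.Perm.one_apply, ← sub_eq_zero]
  simpa using aeval_eq_zero_of_dvd_aeval_eq_zero h hroot

lemma dvd_of_pow_eq_one (hπ : IsFrobeniusOnRoots f π) (hf : f.Separable) {d : ℕ}
    (h : π ^ d = 1) : f ∣ X ^ p ^ d - X := by
  obtain ⟨ρ, -, hrange, hρ⟩ := hπ
  refine dvd_of_separable_of_aeval_eq_zero (K := AlgebraicClosure (ZMod p)) hf fun y hy ↦ ?_
  obtain ⟨x, rfl⟩ : y ∈ Set.range ρ := hrange ▸ (mem_rootSet_of_ne hf.ne_zero).mpr hy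
  have hx : ρ x ^ p ^ d = ρ x := by rw [← apply_pow_eq_pow_pow hρ, h, Equiv.Perm.one_apply]
  simp [hx]

lemma card_support_pow_le [Fintype α] [DecidableEq α] (hπ : IsFrobeniusOnRoots f π)
    {u : (ZMod p)[X]} (hu : u ≠ 0) {d : ℕ} (h : f ∣ u * (X ^ p ^ d - X)) :
    (π ^ d).support.card ≤ u.natDegree := by
  obtain ⟨ρ, hinj, hrange, hρ⟩ := hπ
  have hmaps : ∀ x ∈ (π ^ d).support, ρ x ∈ u.rootSet (AlgebraicClosure (ZMod p)) := by
    intro x hx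
    have hroot : aeval (ρ x) f = 0 :=
      aeval_eq_zero_of_mem_rootSet (hrange ▸ Set.mem_range_self x)
    have hmul : aeval (ρ x) u * (ρ x ^ p ^ d - ρ x) = 0 := by
      simpa using aeval_eq_zero_of_dvd_aeval_eq_zero h hroot
    rw [mem_rootSet_of_ne hu]
    refine (mul_eq_zero.mp hmul).resolve_right fun hfix ↦ Equiv.Perm.mem_support.mp hx (hinj ?_)
    rw [apply_pow_eq_pow_pow hρ, sub_eq_zero.mp hfix]
  rw [← Set.ncard_coe_finset]
  exact (Set.ncard_le_ncard_of_injOn ρ hmaps hinj.injOn (rootSet_finite _ _)).trans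
    (ncard_rootSet_le u _)

lemma isSwap_pow [DecidableEq α] (hπ : IsFrobeniusOnRoots f π) (hf : f.Separable)
    {u : (ZMod p)[X]} (hu : u.natDegree = 2) {d : ℕ} (h : f ∣ u * (X ^ p ^ d - X))
    (hne : ¬ f ∣ X ^ p ^ d - X) : (π ^ d).IsSwap := by
  have := hπ.finite
  have := Fintype.ofFinite α
  have hu0 : u ≠ 0 := by rintro rfl; simp at hu
  have hne' : (π ^ d).support.card ≠ 0 := by
    rw [Ne, Equiv.Perm.card_support_eq_zero]
    exact fun h1 ↦ hne (hπ.dvd_of_pow_eq_one hf h1)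
  have hle := hu ▸ hπ.card_support_pow_le hu0 h
  have hne_one := Equiv.Perm.card_support_ne_one (π ^ d)
  rw [← Equiv.Perm.card_support_eq_two]
  omega

end IsFrobeniusOnRoots

end FrobeniusOnRoots

section ReductionModPrime

open NumberField

lemma exists_frobenius (K : Type*) [Field K] [i : Algebra ℚ K] [FiniteDimensional ℚ K]
    [IsGalois ℚ K] (p : ℕ) [hp : Fact p.Prime] :
    ∃ (φ : 𝓞 K →+* AlgebraicClosure (ZMod p)) (σ : K ≃ₐ[ℚ] K), ∀ y, φ (σ • y) = φ y ^ p := by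
  have : CharZero K := algebraRat.charZero K
  obtain rfl : i = DivisionRing.toRatAlgebra := Subsingleton.elim _ _
  have : NumberField K := ⟨⟩
  have hp' : Prime (p : ℤ) := Nat.prime_iff_prime_int.mp hp.out
  let P : Ideal ℤ := Ideal.span {(p : ℤ)}
  have hP : P.IsMaximal := ((Ideal.span_singleton_prime hp'.ne_zero).mpr hp').isMaximal
    (by simp [hp.out.ne_zero])
  obtain ⟨Q, hQ, hQP⟩ := Ideal.exists_maximal_ideal_liesOver_of_isIntegral (S := 𝓞 K) P
  have hpQ : (p : 𝓞 K) ∈ Q := by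
    have : (p : ℤ) ∈ Q.under ℤ := hQP.over ▸ Ideal.mem_span_singleton_self _
    simpa using this
  have : Finite (𝓞 K ⧸ Q) := Ideal.finiteQuotientOfFreeOfNeBot Q <| by
    rintro rfl
    simp [hp.out.ne_zero] at hpQ
  obtain ⟨σ, hσ⟩ := IsArithFrobAt.exists_of_isInvariant ℤ (K ≃ₐ[ℚ] K) Q
  have hcard : Nat.card (ℤ ⧸ Q.under ℤ) = p := by
    rw [← hQP.over, Nat.card_congr (Int.quotientSpanNatEquivZMod p).toEquiv, Nat.card_zmod]
  let _ := Ideal.Quotient.field Q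
  have : CharP (𝓞 K ⧸ Q) p := ringChar.of_eq <| CharP.ringChar_of_prime_eq_zero hp.out <| by
    simpa using Ideal.Quotient.eq_zero_iff_mem.mpr hpQ
  let _ := ZMod.algebra (𝓞 K ⧸ Q) p
  let ι : (𝓞 K ⧸ Q) →ₐ[ZMod p] AlgebraicClosure (ZMod p) := IsAlgClosed.lift
  refine ⟨(ι : _ →+* _).comp (Ideal.Quotient.mk Q), σ, fun y ↦ ?_⟩
  have hmk : Ideal.Quotient.mk Q (σ • y) = Ideal.Quotient.mk Q y ^ p := hcard ▸ hσ.mk_apply y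
  rw [RingHom.comp_apply, RingHom.comp_apply, ← map_pow, hmk]

lemma injOn_rootSet_of_separable_map {R A B : Type*} [CommRing R] [CommRing A] [IsDomain A]
    [Field B] [Algebra R A] [Algebra R B] {f : R[X]} (hf : (f.map (algebraMap R A)).Splits)
    (hsep : (f.map (algebraMap R B)).Separable) (φ : A →ₐ[R] B) :
    Set.InjOn φ (f.rootSet A) := by
  classical
  have hmap : (f.map (algebraMap R A)).map (φ : A →+* B) = f.map (algebraMap R B) := by
    rw [map_map, φ.comp_algebraMap]
  have hnodup : ((f.map (algebraMap R A)).roots.map (φ : A →+* B)).Nodup := by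
    rw [← hf.roots_map_of_ne_zero (hmap ▸ hsep.ne_zero), hmap]
    exact nodup_roots hsep
  intro x hx y hy hxy
  rw [rootSet, Finset.mem_coe, Multiset.mem_toFinset] at hx hy
  exact Multiset.inj_on_of_nodup_map hnodup x hx y hy hxy

lemma splits_map_ringOfIntegers {K : Type*} [Field K] {f : ℤ[X]} (hf : f.Monic)
    (h : (f.map (algebraMap ℤ K)).Splits) : (f.map (algebraMap ℤ (𝓞 K))).Splits := by
  rw [IsScalarTower.algebraMap_eq ℤ (𝓞 K) K, ← map_map] at h
  refine h.of_splits_map_of_injective RingOfIntegers.coe_injective fun x hx ↦ ?_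
  rw [map_map, ← IsScalarTower.algebraMap_eq] at hx
  exact ⟨⟨x, f, hf, (mem_roots'.mp hx).2 ▸ (eval_map _ _).symm⟩, rfl⟩

lemma image_rootSet_eq_rootSet_map_algebraMap {R S A B : Type*} [CommRing R] [CommRing S]
    [CommRing A] [IsDomain A] [CommRing B] [IsDomain B] [Algebra R A] [Algebra R S] [Algebra S B]
    [Algebra R B] [IsScalarTower R S B] {f : R[X]} (hf : f.Monic)
    (h : (f.map (algebraMap R A)).Splits) (φ : A →ₐ[R] B) :
    φ '' f.rootSet A = (f.map (algebraMap R S)).rootSet B := by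
  classical
  rw [h.image_rootSet_of_map_ne_zero φ (hf.map _).ne_zero, rootSet, rootSet, aroots_map]

theorem exists_isFrobeniusOnRoots {K : Type*} [Field K] [Algebra ℚ K] [FiniteDimensional ℚ K]
    [IsGalois ℚ K] {p : ℕ} [Fact p.Prime] {f : ℤ[X]} (hf : f.Monic)
    [hK : Fact ((f.map (Int.castRingHom ℚ)).map (algebraMap ℚ K)).Splits]
    (hsep : (f.map (Int.castRingHom (ZMod p))).Separable) :
    ∃ π ∈ (Gal.galActionHom (f.map (Int.castRingHom ℚ)) K).range,
      IsFrobeniusOnRoots (f.map (Int.castRingHom (ZMod p))) π := by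
  obtain ⟨φ, σ, hφ⟩ := exists_frobenius K p
  let L := AlgebraicClosure (ZMod p)
  let g := f.map (algebraMap ℤ ℚ)
  have hsplits : (f.map (algebraMap ℤ (𝓞 K))).Splits := by
    refine splits_map_ringOfIntegers hf ?_
    rw [IsScalarTower.algebraMap_eq ℤ ℚ K, ← map_map]
    exact hK.out
  have hsepL : (f.map (algebraMap ℤ L)).Separable := by
    rw [IsScalarTower.algebraMap_eq ℤ (ZMod p) L, ← map_map]
    exact hsep.map
  have hrootK : algebraMap (𝓞 K) K '' f.rootSet (𝓞 K) = g.rootSet K :=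
    image_rootSet_eq_rootSet_map_algebraMap hf hsplits (IsScalarTower.toAlgHom ℤ (𝓞 K) K)
  have hrootL : φ '' f.rootSet (𝓞 K) = (f.map (algebraMap ℤ (ZMod p))).rootSet L :=
    image_rootSet_eq_rootSet_map_algebraMap hf hsplits φ.toIntAlgHom
  have hlift (x : g.rootSet K) : ∃ y ∈ f.rootSet (𝓞 K), algebraMap (𝓞 K) K y = x := by
    rw [← Set.mem_image, hrootK]
    exact x.2
  choose y hy hyx using hlift
  refine ⟨Gal.galActionHom g K (Gal.restrict g K σ), ⟨_, rfl⟩, φ ∘ y, ?_, ?_, ?_⟩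
  · intro x x' h
    have := injOn_rootSet_of_separable_map hsplits hsepL φ.toIntAlgHom (hy x) (hy x') h
    exact Subtype.ext (by rw [← hyx, ← hyx, this])
  · refine (Set.range_comp φ y).trans (hrootL ▸ congrArg _ (Set.Subset.antisymm ?_ ?_))
    · exact Set.range_subset_iff.mpr hy
    · intro z hz
      let x : g.rootSet K := ⟨algebraMap (𝓞 K) K z, hrootK ▸ Set.mem_image_of_mem _ hz⟩
      exact ⟨x, RingOfIntegers.coe_injective (hyx x)⟩
  · intro x
    have hσ : y (Gal.galActionHom g K (Gal.restrict g K σ) x) = σ • y x := by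
      apply RingOfIntegers.coe_injective
      rw [hyx, Gal.galActionHom_restrict, ← hyx]
      rfl
    rw [Function.comp_apply, hσ, hφ, Function.comp_apply]

end ReductionModPrime

section GaloisGroup

lemma not_isRoot_map_of_monic {A K B : Type*} [CommRing A] [IsDomain A]
    [UniqueFactorizationMonoid A] [Field K] [Algebra A K] [IsFractionRing A K] [CommRing B]
    {f : A[X]} (hf : f.Monic) (φ : A →+* B) (h : ∀ x, ¬ (f.map φ).IsRoot x) (x : K) :
    ¬ (f.map (algebraMap A K)).IsRoot x := by
  intro hx
  rw [IsRoot.def, eval_map_algebraMap] at hx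
  obtain ⟨a, rfl⟩ := isInteger_of_is_root_of_monic hf hx
  rw [aeval_algebraMap_eq_zero_iff] at hx
  exact h (φ a) (IsRoot.map (by simpa using hx))

lemma exists_mem_range_galActionHom_ne {F K : Type*} [Field F] [Field K] [Algebra F K]
    [FiniteDimensional F K] [IsGalois F K] {g : F[X]} [Fact (g.map (algebraMap F K)).Splits]
    (h : ∀ x, ¬ g.IsRoot x) (x : g.rootSet K) :
    ∃ π ∈ (Gal.galActionHom g K).range, π x ≠ x := by
  by_contra! hfix
  have hbot : (x : K) ∈ (⊥ : IntermediateField F K) := by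
    rw [IsGalois.mem_bot_iff_fixed]
    intro σ
    rw [← Gal.galActionHom_restrict, hfix _ ⟨_, rfl⟩]
  obtain ⟨a, ha⟩ := IntermediateField.mem_bot.mp hbot
  have hx := aeval_eq_zero_of_mem_rootSet x.2
  rw [← ha, aeval_algebraMap_eq_zero_iff] at hx
  exact h a (by simpa using hx)

-- Over `ℚ` the field `g.SplittingField` carries a second algebra structure,
-- `DivisionRing.toRatAlgebra`, which instance search prefers; an abstract `K` avoids it.
lemma exists_isGalois_splits.{u} {F : Type u} [Field F] [PerfectField F] (g : F[X]) :
    ∃ (K : Type u) (_ : Field K) (_ : Algebra F K), FiniteDimensional F K ∧ IsGalois F K ∧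
      (g.map (algebraMap F K)).Splits :=
  ⟨g.SplittingField, inferInstance, inferInstance, inferInstance, ⟨⟩, SplittingField.splits g⟩

theorem nonempty_gal_mulEquiv_perm_of_dvd {f : ℤ[X]} (hf : f.Monic) {q : ℕ} (hq : q.Prime)
    (hdeg : f.natDegree = q + 1) {ℓ : ℕ}
    (hroot : ∀ x, ¬ (f.map (Int.castRingHom (ZMod ℓ))).IsRoot x)
    {p₁ : ℕ} [Fact p₁.Prime] (hcycle : f.map (Int.castRingHom (ZMod p₁)) ∣ X ^ p₁ ^ q - X)
    (hcycle_ne : ¬ f.map (Int.castRingHom (ZMod p₁)) ∣ X ^ p₁ - X)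
    {p₂ : ℕ} [Fact p₂.Prime] (hsep : (f.map (Int.castRingHom (ZMod p₂))).Separable)
    {u : (ZMod p₂)[X]} (hu : u.natDegree = 2) {d : ℕ}
    (hswap : f.map (Int.castRingHom (ZMod p₂)) ∣ u * (X ^ p₂ ^ d - X))
    (hswap_ne : ¬ f.map (Int.castRingHom (ZMod p₂)) ∣ X ^ p₂ ^ d - X) :
    Nonempty ((f.map (Int.castRingHom ℚ)).Gal ≃* Equiv.Perm (Fin (q + 1))) := by
  let g := f.map (Int.castRingHom ℚ)
  obtain ⟨K, _, _, _, _, hsplits⟩ := exists_isGalois_splits g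
  have : Fact (g.map (algebraMap ℚ K)).Splits := ⟨hsplits⟩
  have hsep₁ := separable_of_dvd_X_pow_sub_X hq.ne_zero hcycle
  obtain ⟨σ, hσ, hσF⟩ := exists_isFrobeniusOnRoots (K := K) hf hsep₁
  obtain ⟨τ, hτ, hτF⟩ := exists_isFrobeniusOnRoots (K := K) hf hsep
  have hcard : Nat.card (g.rootSet K) = q + 1 := by
    rw [hσF.card_eq_natDegree hsep₁, hf.natDegree_map, hdeg]
  have hσ_ne : σ ≠ 1 := fun h ↦
    hcycle_ne (by simpa using hσF.dvd_of_pow_eq_one (d := 1) hsep₁ (by rw [h, one_pow]))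
  have hmove := exists_mem_range_galActionHom_ne (K := K)
    (not_isRoot_map_of_monic (K := ℚ) hf (Int.castRingHom (ZMod ℓ)) hroot)
  have htop := subgroup_eq_top_of_pow_prime_eq_one_of_isSwap hq hcard hσ
    (hσF.pow_eq_one_of_dvd hcycle) hσ_ne hmove (Subgroup.pow_mem _ hτ d)
    (hτF.isSwap_pow hsep hu hswap hswap_ne)
  exact ⟨(MulEquiv.ofBijective (Gal.galActionHom g K) ⟨Gal.galActionHom_injective g K,
    MonoidHom.range_eq_top.mp htop⟩).trans (Equiv.permCongrHom (Finite.equivFinOfCardEq hcard))⟩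

lemma isSplittingField_scaleRoots {F K : Type*} [Field F] [Field K] [Algebra F K] {g : F[X]}
    [IsSplittingField F K g] {s : F} (hs : s ≠ 0) : IsSplittingField F K (g.scaleRoots s) := by
  obtain rfl | hg := eq_or_ne g 0
  · simpa
  refine ⟨?_, top_unique ?_⟩
  · rw [map_scaleRoots _ _ _ (by simpa)]
    exact (IsSplittingField.splits K g).scaleRoots _
  · rw [← IsSplittingField.adjoin_rootSet K g, Algebra.adjoin_le_iff]
    intro y hy
    have hsy : algebraMap F K s * y ∈ (g.scaleRoots s).rootSet K :=
      (mem_rootSet_of_ne (scaleRoots_ne_zero hg s)).mpr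
        (scaleRoots_aeval_eq_zero (aeval_eq_zero_of_mem_rootSet hy))
    have := Subalgebra.smul_mem _ (Algebra.subset_adjoin (R := F) hsy) s⁻¹
    rwa [← Algebra.smul_def, inv_smul_smul₀ hs] at this

lemma nonempty_gal_mulEquiv_gal_scaleRoots {F : Type*} [Field F] (g : F[X]) {s : F} (hs : s ≠ 0) :
    Nonempty (g.Gal ≃* (g.scaleRoots s).Gal) :=
  have : IsSplittingField F g.SplittingField (g.scaleRoots s) := isSplittingField_scaleRoots hs
  ⟨(IsSplittingField.algEquiv g.SplittingField (g.scaleRoots s)).autCongr⟩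

end GaloisGroup

section ModularArithmetic

/-- The polynomial over `ZMod p` with coefficient list `l`, constant term first. -/
noncomputable def ofCoeffs (p : ℕ) (l : List ℕ) : (ZMod p)[X] :=
  l.foldr (fun a g ↦ C (a : ZMod p) + X * g) 0

/-- The linear combination `c * u + v` of coefficient lists modulo `p`. -/
def smulAdd (p c : ℕ) (u v : List ℕ) : List ℕ :=
  List.zipWith (fun x y ↦ (c * x + y) % p) u v

/-- The linear combination of the coefficient lists `rows`, all of length `n`, with weights `q`,
modulo `p`. -/
def lincomb (p n : ℕ) : List ℕ → List (List ℕ) → List ℕ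
  | a :: q, v :: rows => smulAdd p a v (lincomb p n q rows)
  | _, _ => List.replicate n 0

/-- The polynomial `X ^ n - r` of degree `n = r.length` over `ZMod p`, where `r` is read as a
coefficient list. -/
noncomputable def modulus (p : ℕ) (r : List ℕ) : (ZMod p)[X] :=
  X ^ r.length - ofCoeffs p r

/-- The coefficient list of the product of `X` and `l` modulo `modulus p r`. -/
def mulX (p : ℕ) (r l : List ℕ) : List ℕ :=
  smulAdd p (l.getLastD 0) r (0 :: l.dropLast)

/-- The coefficient list of `X ^ k` modulo `modulus p r`. -/
def powX (p : ℕ) (r : List ℕ) (k : ℕ) : List ℕ :=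
  (mulX p r)^[k] (1 :: List.replicate (r.length - 1) 0)

/-- The coefficient list of the product of `u` and `v` modulo `modulus p r`. -/
def mulMod (p : ℕ) (r u v : List ℕ) : List ℕ :=
  lincomb p r.length u (List.iterate (mulX p r) v r.length)

/-- The coefficient list of the `p`-th power of `l` modulo `modulus p r`, computed as the
combination of the powers of `X ^ p` with weights `l`. -/
def frobMod (p : ℕ) (r l : List ℕ) : List ℕ :=
  lincomb p r.length l
    (List.iterate (fun v ↦ mulMod p r v (powX p r p)) (powX p r 0) r.length)

/-- The coefficient list of `X ^ p ^ d` modulo `modulus p r`. -/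
def frobPowX (p : ℕ) (r : List ℕ) (d : ℕ) : List ℕ :=
  (frobMod p r)^[d] (powX p r 1)

/-- The coefficient list `l` is the reduced representative of the element `a` of the quotient by
`modulus p r`. -/
structure Represents (p : ℕ) (r l : List ℕ) (a : AdjoinRoot (modulus p r)) : Prop where
  length_eq : l.length = r.length
  lt : ∀ c ∈ l, c < p
  mk_eq : AdjoinRoot.mk (modulus p r) (ofCoeffs p l) = a

variable {p : ℕ}

@[simp]
lemma ofCoeffs_nil : ofCoeffs p [] = 0 := rfl

@[simp]
lemma ofCoeffs_cons (a : ℕ) (l : List ℕ) :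
    ofCoeffs p (a :: l) = C (a : ZMod p) + X * ofCoeffs p l := rfl

lemma ofCoeffs_append (u v : List ℕ) :
    ofCoeffs p (u ++ v) = ofCoeffs p u + X ^ u.length * ofCoeffs p v := by
  induction u with
  | nil => simp
  | cons a u ih => simp only [List.cons_append, ofCoeffs_cons, List.length_cons, ih]; ring

@[simp]
lemma ofCoeffs_replicate_zero (n : ℕ) : ofCoeffs p (List.replicate n 0) = 0 := by
  induction n with
  | zero => rfl
  | succ n ih => simp [List.replicate_succ, ih]

lemma coeff_ofCoeffs (l : List ℕ) (i : ℕ) : (ofCoeffs p l).coeff i = (l.getD i 0 : ZMod p) := by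
  induction l generalizing i with
  | nil => simp
  | cons a l ih => cases i <;> simp [ih]

lemma degree_ofCoeffs_lt (l : List ℕ) : (ofCoeffs p l).degree < l.length := by
  rw [degree_lt_iff_coeff_zero]
  intro i hi
  rw [coeff_ofCoeffs, List.getD_eq_default _ _ hi, Nat.cast_zero]

lemma ofCoeffs_smulAdd (c : ℕ) {u v : List ℕ} (h : u.length = v.length) :
    ofCoeffs p (smulAdd p c u v) = C (c : ZMod p) * ofCoeffs p u + ofCoeffs p v := by
  induction u generalizing v with
  | nil => simp [smulAdd, List.length_eq_zero_iff.mp h.symm]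
  | cons a u ih =>
    obtain _ | ⟨b, v⟩ := v
    · simp at h
    · have hrec := ih (v := v) (by simpa using h)
      simp only [smulAdd, List.zipWith_cons_cons, ofCoeffs_cons, ZMod.natCast_mod, Nat.cast_add,
        Nat.cast_mul, map_add, map_mul] at hrec ⊢
      rw [hrec]
      ring

lemma length_smulAdd {c n : ℕ} {u v : List ℕ} (hu : u.length = n) (hv : v.length = n) :
    (smulAdd p c u v).length = n := by
  simp [smulAdd, hu, hv]

lemma lt_of_mem_smulAdd [NeZero p] {c x : ℕ} {u v : List ℕ} (h : x ∈ smulAdd p c u v) : x < p := by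
  induction u generalizing v with
  | nil => simp [smulAdd] at h
  | cons a u ih =>
    obtain _ | ⟨b, v⟩ := v
    · simp [smulAdd] at h
    · obtain rfl | h := List.mem_cons.mp h
      · exact Nat.mod_lt _ (NeZero.pos p)
      · exact ih h

lemma eq_of_ofCoeffs_eq {u v : List ℕ} (hlen : u.length = v.length) (hu : ∀ c ∈ u, c < p)
    (hv : ∀ c ∈ v, c < p) (h : ofCoeffs p u = ofCoeffs p v) : u = v := by
  refine List.ext_getElem hlen fun i hi hi' ↦ ?_
  have hcoeff := congrArg (coeff · i) h
  simp only [coeff_ofCoeffs, List.getD_eq_getElem _ _ hi, List.getD_eq_getElem _ _ hi'] at hcoeff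
  rw [ZMod.natCast_eq_natCast_iff'] at hcoeff
  rwa [Nat.mod_eq_of_lt (hu _ (List.getElem_mem hi)),
    Nat.mod_eq_of_lt (hv _ (List.getElem_mem hi'))] at hcoeff

lemma degree_modulus [Fact p.Prime] (r : List ℕ) : (modulus p r).degree = r.length := by
  rw [modulus, degree_sub_eq_left_of_degree_lt] <;> rw [degree_X_pow]
  exact degree_ofCoeffs_lt r

variable [Fact p.Prime] {r : List ℕ}

lemma Represents.eq_iff {u v : List ℕ} {a b : AdjoinRoot (modulus p r)} (hu : Represents p r u a)
    (hv : Represents p r v b) : u = v ↔ a = b := by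
  refine ⟨fun h ↦ by rw [← hu.mk_eq, ← hv.mk_eq, h], fun h ↦ ?_⟩
  have hdvd : modulus p r ∣ ofCoeffs p u - ofCoeffs p v := by
    rw [← AdjoinRoot.mk_eq_mk, hu.mk_eq, hv.mk_eq, h]
  refine eq_of_ofCoeffs_eq (hu.length_eq.trans hv.length_eq.symm) hu.lt hv.lt
    (sub_eq_zero.mp (eq_zero_of_dvd_of_degree_lt hdvd ?_))
  rw [degree_modulus]
  exact (degree_sub_le _ _).trans_lt (max_lt (hu.length_eq ▸ degree_ofCoeffs_lt u)
    (hv.length_eq ▸ degree_ofCoeffs_lt v))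

lemma represents_mulX {l : List ℕ} {a : AdjoinRoot (modulus p r)} (hr : r ≠ [])
    (h : Represents p r l a) :
    Represents p r (mulX p r l) (AdjoinRoot.root (modulus p r) * a) := by
  obtain ⟨hlen, -, rfl⟩ := h
  obtain ⟨l, c, rfl⟩ := l.eq_nil_or_concat'.resolve_left fun h ↦
    hr (List.length_eq_zero_iff.mp (by simpa [h] using hlen.symm))
  have hlen' : (0 :: l).length = r.length := by simpa using hlen
  refine ⟨length_smulAdd rfl (by simpa using hlen'), fun _ ↦ lt_of_mem_smulAdd, ?_⟩
  rw [mulX, ofCoeffs_smulAdd _ (by simpa using hlen'.symm), AdjoinRoot.root, ← map_mul,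
    AdjoinRoot.mk_eq_mk]
  refine ⟨-C (c : ZMod p), ?_⟩
  have hlast : (l ++ [c]).getLastD 0 = c := by simp
  simp only [hlast, modulus, ← hlen', List.dropLast_concat, List.length_cons, ofCoeffs_append,
    ofCoeffs_cons, ofCoeffs_nil, Nat.cast_zero, map_zero]
  ring

lemma represents_lincomb_iterate {g : List ℕ → List ℕ} {z : AdjoinRoot (modulus p r)}
    (hg : ∀ {v a}, Represents p r v a → Represents p r (g v) (z * a)) {q v : List ℕ}
    {a : AdjoinRoot (modulus p r)} {m : ℕ} (hq : q.length ≤ m) (h : Represents p r v a) :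
    Represents p r (lincomb p r.length q (List.iterate g v m)) (aeval z (ofCoeffs p q) * a) := by
  induction q generalizing v a m with
  | nil => exact ⟨by simp [lincomb], by simp [lincomb, NeZero.pos], by simp [lincomb]⟩
  | cons c q ih =>
    obtain _ | m := m
    · simp at hq
    · obtain ⟨hlen, -, hmk⟩ := ih (by simpa using hq) (hg h)
      refine ⟨length_smulAdd h.length_eq hlen, fun _ ↦ lt_of_mem_smulAdd, ?_⟩
      simp only [List.iterate, lincomb]
      rw [ofCoeffs_smulAdd _ (h.length_eq.trans hlen.symm), map_add, map_mul, hmk, h.mk_eq]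
      simp only [ofCoeffs_cons, map_add, map_mul, aeval_C, aeval_X, AdjoinRoot.mk_C,
        AdjoinRoot.algebraMap_eq]
      ring

lemma represents_powX (hr : r ≠ []) (k : ℕ) :
    Represents p r (powX p r k) (AdjoinRoot.root (modulus p r) ^ k) := by
  induction k with
  | zero =>
    refine ⟨?_, by simp [powX, NeZero.pos, (Fact.out : p.Prime).one_lt], by simp [powX]⟩
    simp [powX, Nat.sub_add_cancel (List.length_pos_iff.mpr hr)]
  | succ k ih =>
    rw [powX, Function.iterate_succ_apply', pow_succ']
    exact represents_mulX hr ih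

lemma represents_mulMod {u v : List ℕ} {b : AdjoinRoot (modulus p r)} (hr : r ≠ [])
    (hu : u.length ≤ r.length) (hv : Represents p r v b) :
    Represents p r (mulMod p r u v) (AdjoinRoot.mk (modulus p r) (ofCoeffs p u) * b) := by
  rw [← AdjoinRoot.aeval_eq]
  exact represents_lincomb_iterate (represents_mulX hr) hu hv

lemma represents_frobMod {l : List ℕ} {a : AdjoinRoot (modulus p r)} (hr : r ≠ [])
    (h : Represents p r l a) : Represents p r (frobMod p r l) (a ^ p) := by
  have hmul {v a} (hv : Represents p r v a) :
      Represents p r (mulMod p r v (powX p r p))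
        (AdjoinRoot.root (modulus p r) ^ p * a) := by
    rw [mul_comm, ← hv.mk_eq]
    exact represents_mulMod hr hv.length_eq.le (represents_powX hr p)
  have hpow : aeval (AdjoinRoot.root (modulus p r) ^ p) (ofCoeffs p l) = a ^ p := by
    rw [← expand_aeval, ZMod.expand_card, map_pow, AdjoinRoot.aeval_eq, h.mk_eq]
  simpa only [frobMod, hpow, pow_zero, mul_one] using
    represents_lincomb_iterate hmul h.length_eq.le (represents_powX hr 0)

lemma represents_frobPowX (hr : r ≠ []) (d : ℕ) :
    Represents p r (frobPowX p r d) (AdjoinRoot.root (modulus p r) ^ p ^ d) := by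
  induction d with
  | zero => simpa [frobPowX] using represents_powX hr 1
  | succ d ih =>
    rw [frobPowX, Function.iterate_succ_apply', pow_succ, pow_mul]
    exact represents_frobMod hr ih

lemma modulus_dvd_X_pow_sub_X_iff (hr : r ≠ []) (d : ℕ) :
    modulus p r ∣ X ^ p ^ d - X ↔ frobPowX p r d = powX p r 1 := by
  rw [(represents_frobPowX hr d).eq_iff (represents_powX hr 1), ← AdjoinRoot.mk_eq_mk, map_pow,
    AdjoinRoot.mk_X, pow_one]

lemma modulus_dvd_mul_X_pow_sub_X_iff {u : List ℕ} (hu : u.length ≤ r.length) (hr : r ≠ [])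
    (d : ℕ) : modulus p r ∣ ofCoeffs p u * (X ^ p ^ d - X) ↔
      mulMod p r u (frobPowX p r d) = mulMod p r u (powX p r 1) := by
  rw [(represents_mulMod hr hu (represents_frobPowX hr d)).eq_iff
    (represents_mulMod hr hu (represents_powX hr 1)), mul_sub, ← AdjoinRoot.mk_eq_mk, map_mul,
    map_mul, map_pow, AdjoinRoot.mk_X, pow_one]

end ModularArithmetic

section Trinomials

/-- The coefficient list of `X ^ (n + 2)` modulo `p` and `X ^ (n + 2) + a * X + b`. -/
def trinomialTail (p n : ℕ) (a b : ℤ) : List ℕ :=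
  (-b % p).toNat :: (-a % p).toNat :: List.replicate n 0

lemma monic_X_pow_add_C_mul_X_add_C {R : Type*} [CommRing R] {n : ℕ} (a b : R) :
    (X ^ (n + 2) + C a * X + C b).Monic := by
  rw [add_assoc]
  exact monic_X_pow_add (degree_linear_le.trans_lt (by exact_mod_cast Nat.lt_add_left n one_lt_two))

lemma natDegree_X_pow_add_C_mul_X_add_C {R : Type*} [CommRing R] [Nontrivial R] {n : ℕ} (a b : R) :
    (X ^ (n + 2) + C a * X + C b).natDegree = n + 2 := by
  rw [add_assoc, natDegree_add_eq_left_of_natDegree_lt, natDegree_X_pow]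
  rw [natDegree_X_pow]
  exact natDegree_linear_le.trans_lt (by omega)

lemma natCast_toNat_emod {p : ℕ} [NeZero p] (a : ℤ) : ((a % p).toNat : ZMod p) = a := by
  rw [← Int.cast_natCast, Int.toNat_of_nonneg (Int.emod_nonneg a (by simp [NeZero.ne])),
    ZMod.intCast_mod]

lemma map_trinomial_eq_modulus {p n : ℕ} [NeZero p] (a b : ℤ) :
    (X ^ (n + 2) + C a * X + C b).map (Int.castRingHom (ZMod p)) =
      modulus p (trinomialTail p n a b) := by
  simp only [modulus, trinomialTail, List.length_cons, List.length_replicate, ofCoeffs_cons,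
    ofCoeffs_replicate_zero, natCast_toNat_emod, eq_intCast, Polynomial.map_add, Polynomial.map_pow,
    Polynomial.map_mul, Polynomial.map_intCast, map_X, Int.cast_neg, map_neg, map_intCast]
  ring

lemma natDegree_ofCoeffs_quadratic {p x y z : ℕ} (hz : ¬ p ∣ z) :
    (ofCoeffs p [x, y, z]).natDegree = 2 := by
  rw [← ZMod.natCast_eq_zero_iff] at hz
  rw [← natDegree_quadratic hz (b := (y : ZMod p)) (c := x)]
  congr 1
  simp only [ofCoeffs_cons, ofCoeffs_nil, map_natCast]
  ring

lemma scaleRoots_X_pow_add_C_mul_X_add_C {R : Type*} [CommRing R] [Nontrivial R] {n : ℕ}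
    (a b d : R) :
    (X ^ (n + 2) + C a * X + C b).scaleRoots d =
      X ^ (n + 2) + C (a * d ^ (n + 1)) * X + C (b * d ^ (n + 2)) := by
  ext i
  rw [coeff_scaleRoots, natDegree_X_pow_add_C_mul_X_add_C]
  obtain _ | _ | i := i
  · simp [-map_mul, -map_pow]
  · simp [-map_mul, -map_pow, coeff_X_pow, coeff_C]
  · obtain rfl | hi := eq_or_ne i n <;> simp [-map_mul, -map_pow, coeff_X_pow, *]

/-- Equalities of coefficient lists implying, for `modulus p r` of degree `q + 1` with `q` prime,
that its factors over `ZMod p` have degrees `1` and `q`. -/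
abbrev IsCycleCertificate (p q : ℕ) (r : List ℕ) : Prop :=
  frobPowX p r q = powX p r 1 ∧ frobPowX p r 1 ≠ powX p r 1

/-- Equalities of coefficient lists implying that the `d`-th power of the Frobenius at `p` swaps
two roots of `modulus p r`, namely those of the quadratic polynomial with coefficient list `u`, and
fixes the others. -/
abbrev IsSwapCertificate (p d : ℕ) (r u : List ℕ) : Prop :=
  frobPowX p r (2 * d) = powX p r 1 ∧ frobPowX p r d ≠ powX p r 1 ∧
    mulMod p r u (frobPowX p r d) = mulMod p r u (powX p r 1)

theorem nonempty_gal_trinomial_mulEquiv_perm {n : ℕ} (hn : (n + 1).Prime) (a b : ℤ)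
    {ℓ : ℕ} (hroot : ∀ x : ZMod ℓ, x ^ (n + 2) + a * x + b ≠ 0)
    {p₁ : ℕ} [Fact p₁.Prime] (hcycle : IsCycleCertificate p₁ (n + 1) (trinomialTail p₁ n a b))
    {p₂ : ℕ} [Fact p₂.Prime] {d x y z : ℕ} (hz : ¬ p₂ ∣ z)
    (hswap : IsSwapCertificate p₂ d (trinomialTail p₂ n a b) [x, y, z]) :
    Nonempty (((X ^ (n + 2) + C a * X + C b).map (Int.castRingHom ℚ)).Gal ≃*
      Equiv.Perm (Fin (n + 2))) := by
  have hd : d ≠ 0 := by rintro rfl; exact hswap.2.1 rfl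
  have hne (p : ℕ) : trinomialTail p n a b ≠ [] := by simp [trinomialTail]
  have hlen : [x, y, z].length ≤ (trinomialTail p₂ n a b).length := by
    simpa [trinomialTail] using hn.two_le
  refine nonempty_gal_mulEquiv_perm_of_dvd (ℓ := ℓ) (p₁ := p₁) (p₂ := p₂) (d := d)
    (monic_X_pow_add_C_mul_X_add_C a b) hn (natDegree_X_pow_add_C_mul_X_add_C a b)
    (fun x ↦ by simpa using hroot x) ?_ ?_ ?_ (natDegree_ofCoeffs_quadratic hz (x := x) (y := y))
    ?_ ?_ <;> rw [map_trinomial_eq_modulus]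
  · exact (modulus_dvd_X_pow_sub_X_iff (hne _) _).mpr hcycle.1
  · simpa only [pow_one] using (modulus_dvd_X_pow_sub_X_iff (hne _) 1).not.mpr hcycle.2
  · exact separable_of_dvd_X_pow_sub_X (mul_ne_zero two_ne_zero hd)
      ((modulus_dvd_X_pow_sub_X_iff (hne _) _).mpr hswap.1)
  · exact (modulus_dvd_mul_X_pow_sub_X_iff hlen (hne _) _).mpr hswap.2.2
  · exact (modulus_dvd_X_pow_sub_X_iff (hne _) _).not.mpr hswap.2.1

theorem nonempty_gal_X_pow_add_C_mul_X_add_one_mulEquiv_perm_s15 {n : ℕ} (hn : (n + 1).Prime) {t : ℚ}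
    {c D : ℤ} (hD : D ≠ 0) (ht : t * D = c) {ℓ : ℕ}
    (hroot : ∀ x : ZMod ℓ, x ^ (n + 2) + (c * D ^ n : ℤ) * x + (c * D ^ (n + 1) : ℤ) ≠ 0)
    {p₁ : ℕ} [Fact p₁.Prime]
    (hcycle : IsCycleCertificate p₁ (n + 1) (trinomialTail p₁ n (c * D ^ n) (c * D ^ (n + 1))))
    {p₂ : ℕ} [Fact p₂.Prime] {d x y z : ℕ} (hz : ¬ p₂ ∣ z)
    (hswap : IsSwapCertificate p₂ d (trinomialTail p₂ n (c * D ^ n) (c * D ^ (n + 1))) [x, y, z]) :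
    Nonempty ((X ^ (n + 2) + C t * (X + 1)).Gal ≃* Equiv.Perm (Fin (n + 2))) := by
  have hscale : (X ^ (n + 2) + C t * (X + 1)).scaleRoots (D : ℚ) =
      (X ^ (n + 2) + C (c * D ^ n) * X + C (c * D ^ (n + 1))).map (Int.castRingHom ℚ) := by
    have hX : t * D ^ (n + 1) = c * D ^ n := by rw [← ht]; ring
    have hC : t * D ^ (n + 2) = c * D ^ (n + 1) := by rw [← ht]; ring
    rw [mul_add, mul_one, ← add_assoc, scaleRoots_X_pow_add_C_mul_X_add_C, hX, hC]
    simp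
  obtain ⟨e⟩ := nonempty_gal_mulEquiv_gal_scaleRoots (X ^ (n + 2) + C t * (X + 1))
    (Int.cast_ne_zero.mpr hD)
  rw [hscale] at e
  obtain ⟨e'⟩ := nonempty_gal_trinomial_mulEquiv_perm hn _ _ hroot hcycle hz hswap
  exact ⟨e.trans e'⟩

end Trinomials

theorem nonempty_gal_h1Prof_mulEquiv_perm : Nonempty (h1Prof.Gal ≃* Equiv.Perm (Fin 24)) := by
  have : Fact (Nat.Prime 67) := ⟨by norm_num⟩
  have : Fact (Nat.Prime 13) := ⟨by norm_num⟩
  exact nonempty_gal_X_pow_add_C_mul_X_add_one_mulEquiv_perm_s15 (n := 22) (by norm_num)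
    (c := 2 ^ 64 * 3 ^ 23) (D := 23 ^ 23 * 31 * 281 * 1201 * 70529 * 9801219477271)
    (by norm_num) (by norm_num) (ℓ := 5) (by decide +kernel) (p₁ := 67) (by decide +kernel)
    (p₂ := 13) (d := 21) (x := 10) (y := 7) (z := 4) (by decide) (by decide +kernel)

theorem nonempty_gal_h2Prof_mulEquiv_perm : Nonempty (h2Prof.Gal ≃* Equiv.Perm (Fin 24)) := by
  have : Fact (Nat.Prime 149) := ⟨by norm_num⟩
  have : Fact (Nat.Prime 131) := ⟨by norm_num⟩
  rw [h2Prof, sub_eq_add_neg, ← neg_mul, ← C_neg]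
  exact nonempty_gal_X_pow_add_C_mul_X_add_one_mulEquiv_perm_s15 (n := 22) (by norm_num)
    (c := -(2 ^ 75 * 3 ^ 14 * 31 * 281 * 1201 * 70529 * 9801219477271))
    (D := 7 ^ 2 * 23 ^ 22 * 195574568093355782014153 ^ 2)
    (by norm_num) (by norm_num) (ℓ := 19) (by decide +kernel) (p₁ := 149) (by decide +kernel)
    (p₂ := 131) (d := 21) (x := 127) (y := 120) (z := 93) (by decide) (by decide +kernel)

theorem nonempty_gal_h3Prof_mulEquiv_perm : Nonempty (h3Prof.Gal ≃* Equiv.Perm (Fin 24)) := by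
  have : Fact (Nat.Prime 139) := ⟨by norm_num⟩
  have : Fact (Nat.Prime 47) := ⟨by norm_num⟩
  rw [h3Prof, sub_eq_add_neg, ← neg_mul, ← C_neg]
  exact nonempty_gal_X_pow_add_C_mul_X_add_one_mulEquiv_perm_s15 (n := 22) (by norm_num)
    (c := -(2 ^ 72 * 3 ^ 24 * 7 * 1437417619559484462138047)) (D := 23 ^ 22)
    (by norm_num) (by norm_num) (ℓ := 5) (by decide +kernel) (p₁ := 139) (by decide +kernel)
    (p₂ := 47) (d := 21) (x := 30) (y := 16) (z := 4) (by decide) (by decide +kernel)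

/-- For each `i ∈ {1, 2, 3}`, the Galois group over `ℚ` of (the splitting field of) `hᵢ`
is isomorphic to the symmetric group `S24`. -/
theorem hi_galois :
    Nonempty (h1Prof.Gal ≃* Equiv.Perm (Fin 24)) ∧
    Nonempty (h2Prof.Gal ≃* Equiv.Perm (Fin 24)) ∧
    Nonempty (h3Prof.Gal ≃* Equiv.Perm (Fin 24)) :=
  ⟨nonempty_gal_h1Prof_mulEquiv_perm, nonempty_gal_h2Prof_mulEquiv_perm,
    nonempty_gal_h3Prof_mulEquiv_perm⟩
end
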